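/- arXiv:2303.07664 — 4 statements merged into one kernel-verified Lean document; each statement's English description precedes it below -/
import Mathlib

section
/- The central-binomial sum ∑_{k≥0} C(2k,k)/(16^k·(2k+1)²) equals Cl₂(π/3) = ∑_{n≥1} sin(nπ/3)/n², where C(2k,k) denotes the central binomial coefficient. -/
open Real

/-- Termwise differentiation of a power series with bounded coefficients. -/
theorem aux_hasDerivAt {K : Type*} [RCLike K] (a : ℕ → K) (e : ℕ → ℕ)
    (ha : ∀ k, ‖a k‖ ≤ 1) (he : ∀ k, k ≤ e k) (z : K) (hz : ‖z‖ < 1) :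
    HasDerivAt (fun w : K => ∑' k, a k * w ^ (e k + 1) / ((e k : K) + 1))
      (∑' k, a k * z ^ (e k)) z := by
  obtain ⟨r, hzr, hr1⟩ := exists_between hz
  have hr0 : 0 ≤ r := (norm_nonneg z).trans hzr.le
  refine hasDerivAt_tsum_of_isPreconnected (u := fun k => r ^ k)
    (g := fun k w => a k * w ^ (e k + 1) / ((e k : K) + 1))
    (g' := fun k w => a k * w ^ (e k))
    (t := Metric.ball 0 r) (y₀ := 0)
    (summable_geometric_of_lt_one hr0 hr1) Metric.isOpen_ball
    (convex_ball (0 : K) r).isPreconnected ?_ ?_ ?_ ?_ ?_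
  · intro k w _
    have h0 : (e k : K) + 1 ≠ 0 := Nat.cast_add_one_ne_zero _
    have h := ((hasDerivAt_pow (e k + 1) w).const_mul (a k)).div_const ((e k : K) + 1)
    convert! h using 1
    push_cast
    field_simp
  · intro k w hw
    have hw' : ‖w‖ < r := by simpa using hw
    rw [norm_mul, norm_pow]
    calc ‖a k‖ * ‖w‖ ^ e k ≤ 1 * r ^ e k := by
          gcongr
          exact ha k
      _ = r ^ e k := one_mul _
      _ ≤ r ^ k := pow_le_pow_of_le_one hr0 hr1.le (he k)
  · simpa using lt_of_le_of_lt (norm_nonneg z) hzr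
  · simp
  · simpa using hzr

/-- The normalised central binomial coefficient. -/
noncomputable def cc (k : ℕ) : ℝ := ((2 * k).choose k : ℝ) / 4 ^ k

theorem cc_nonneg (k : ℕ) : 0 ≤ cc k := by unfold cc; positivity

theorem cc_le (k : ℕ) : cc k ≤ 1 := by
  unfold cc
  rw [div_le_one (by positivity)]
  exact_mod_cast Nat.centralBinom_le_four_pow k

theorem cc_succ (k : ℕ) : ((k : ℝ) + 1) * cc (k + 1) = (k + 1 / 2) * cc k := by
  have h := Nat.succ_mul_centralBinom_succ k
  have h' : ((k : ℝ) + 1) * ((2 * (k + 1)).choose (k + 1) : ℕ)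
      = 2 * (2 * k + 1) * ((2 * k).choose k : ℕ) := by exact_mod_cast h
  unfold cc
  rw [← mul_div_assoc, h', pow_succ]
  field_simp
  ring

theorem choose_eq_cc (k : ℕ) : Ring.choose ((1 / 2 : ℝ) + k - 1) k = cc k := by
  rw [← Ring.multichoose_eq]
  have key : (ascPochhammer ℝ k).eval (1 / 2 : ℝ) = (k.factorial : ℝ) * cc k := by
    induction k with
    | zero => simp [cc]
    | succ n ih =>
      rw [ascPochhammer_succ_eval, ih, Nat.factorial_succ]
      push_cast
      have := cc_succ n
      linear_combination (-(n.factorial : ℝ)) * this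
  have h2 := Ring.factorial_nsmul_multichoose_eq_ascPochhammer (1 / 2 : ℝ) k
  rw [Polynomial.ascPochhammer_smeval_eq_eval, key, nsmul_eq_mul] at h2
  exact mul_left_cancel₀ (by positivity) h2

theorem tsum_cc (y : ℝ) (hy : |y| < 1) : ∑' k, cc k * y ^ k = 1 / (1 - y) ^ (1 / 2 : ℝ) := by
  have h := (one_div_one_sub_rpow_hasFPowerSeriesOnBall_zero (1 / 2)).hasSum
    (y := y) (by simpa [enorm_eq_nnnorm] using! hy)
  simp only [zero_add] at h
  rw [← h.tsum_eq]
  refine tsum_congr fun k => ?_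
  rw [FormalMultilinearSeries.ofScalars_apply_eq, choose_eq_cc, smul_eq_mul]

theorem tsum_cc_sin (t : ℝ) (h0 : 0 ≤ t) (h1 : t < π / 2) :
    ∑' k, cc k * sin t ^ (2 * k) = 1 / cos t := by
  have hc : 0 < cos t := cos_pos_of_mem_Ioo ⟨by linarith, h1⟩
  have := tsum_cc (sin t ^ 2) (by
    rw [abs_of_nonneg (sq_nonneg _)]; nlinarith [sin_sq_add_cos_sq t])
  simp_rw [← pow_mul] at this
  rw [this, ← sqrt_eq_rpow, ← cos_sq', sqrt_sq hc.le]

theorem abs_sin_lt (t : ℝ) (h0 : 0 ≤ t) (h1 : t < π / 2) : ‖sin t‖ < 1 := by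
  have hc : 0 < cos t := cos_pos_of_mem_Ioo ⟨by linarith, h1⟩
  rw [norm_eq_abs, abs_lt]
  constructor <;> nlinarith [sin_sq_add_cos_sq t]

/-- The arcsine series. -/
theorem arcsin_series (t : ℝ) (h0 : 0 < t) (h1 : t < π / 2) :
    ∑' k, cc k * sin t ^ (2 * k + 1) / (((2 * k : ℕ) : ℝ) + 1) = t := by
  let g : ℝ → ℝ := fun s => (∑' k, cc k * sin s ^ (2 * k + 1) / (((2 * k : ℕ) : ℝ) + 1)) - s
  have hd : ∀ s, 0 ≤ s → s < π / 2 → HasDerivAt g 0 s := by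
    intro s hs0 hs1
    have hc : 0 < cos s := cos_pos_of_mem_Ioo ⟨by linarith, hs1⟩
    have h := aux_hasDerivAt cc (fun k => 2 * k)
      (fun k => by rw [norm_eq_abs, abs_of_nonneg (cc_nonneg k)]; exact cc_le k)
      (fun k => by lia) (sin s) (abs_sin_lt s hs0 hs1)
    rw [tsum_cc_sin s hs0 hs1] at h
    have h2 := (h.comp s (hasDerivAt_sin s)).sub (hasDerivAt_id s)
    convert! h2 using 1
    field_simp
    simp
  obtain ⟨c, hc, hc'⟩ := exists_hasDerivAt_eq_slope g (fun _ => 0) h0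
    (fun s hs => (hd s hs.1 (lt_of_le_of_lt hs.2 h1)).continuousAt.continuousWithinAt)
    (fun s hs => hd s hs.1.le (hs.2.trans h1))
  have hg0 : g 0 = 0 := by simp [g]
  rw [hg0, eq_div_iff (by linarith)] at hc'
  have : g t = 0 := by linarith
  simpa [g, sub_eq_zero] using this

noncomputable def FF (x : ℝ) : ℝ :=
  ∑' k, (cc k / (((2 * k : ℕ) : ℝ) + 1)) * x ^ (2 * k + 1) / (((2 * k : ℕ) : ℝ) + 1)

theorem FF_deriv (t : ℝ) (h0 : 0 < t) (h1 : t < π / 2) :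
    HasDerivAt FF (t / sin t) (sin t) := by
  have h := aux_hasDerivAt (fun k => cc k / (((2 * k : ℕ) : ℝ) + 1)) (fun k => 2 * k)
      (fun k => by
        rw [norm_eq_abs, abs_of_nonneg (div_nonneg (cc_nonneg k) (by positivity))]
        rw [div_le_one (by positivity)]
        have : (0 : ℝ) ≤ ((2 * k : ℕ) : ℝ) := by positivity
        linarith [cc_le k])
      (fun k => by lia) (sin t) (abs_sin_lt t h0.le h1)
  convert! h using 1
  have hs : 0 < sin t := sin_pos_of_pos_of_lt_pi h0 (by linarith [pi_pos])
  rw [div_eq_iff hs.ne', ← tsum_mul_right]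
  conv_lhs => rw [← arcsin_series t h0 h1]
  refine tsum_congr fun k => ?_
  rw [pow_succ]
  ring

theorem FF_cont0 : ContinuousAt FF 0 := by
  have h := aux_hasDerivAt (fun k => cc k / (((2 * k : ℕ) : ℝ) + 1)) (fun k => 2 * k)
      (fun k => by
        rw [norm_eq_abs, abs_of_nonneg (div_nonneg (cc_nonneg k) (by positivity))]
        rw [div_le_one (by positivity)]
        have : (0 : ℝ) ≤ ((2 * k : ℕ) : ℝ) := by positivity
        linarith [cc_le k])
      (fun k => by lia) (0 : ℝ) (by simp)
  exact h.continuousAt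

/-- The dilogarithm. -/
noncomputable def Li (z : ℂ) : ℂ := ∑' n : ℕ, (1 / ((n : ℂ) + 1)) * z ^ (n + 1) / ((n : ℂ) + 1)

theorem Li_deriv (z : ℂ) (hz : ‖z‖ < 1) (hz0 : z ≠ 0) :
    HasDerivAt Li (-Complex.log (1 - z) / z) z := by
  have h := aux_hasDerivAt (fun n : ℕ => 1 / ((n : ℂ) + 1)) (fun n => n)
    (fun n => by
      have : ‖(n : ℂ) + 1‖ = n + 1 := by
        have := Complex.norm_natCast (n + 1)
        push_cast at this
        exact this
      rw [norm_div, this, norm_one, div_le_one (by positivity)]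
      have : (0 : ℝ) ≤ n := by positivity
      linarith) (fun n => le_rfl) z hz
  convert! h using 1
  rw [div_eq_iff hz0, ← tsum_mul_right, ← (Complex.hasSum_taylorSeries_neg_log' hz).tsum_eq]
  refine tsum_congr fun k => ?_
  rw [pow_succ]
  ring

theorem norm_succ_cast (n : ℕ) : ‖(n : ℂ) + 1‖ = n + 1 := by
  have := Complex.norm_natCast (n + 1)
  push_cast at this
  exact this

theorem summable_sq : Summable fun n : ℕ => 1 / ((n : ℝ) + 1) ^ 2 := by
  have h := (summable_nat_add_iff 1).2 (Real.summable_one_div_nat_pow.2 (one_lt_two))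
  simpa using h

theorem Li_term_le (n : ℕ) (z : ℂ) (hz : ‖z‖ ≤ 1) :
    ‖(1 / ((n : ℂ) + 1)) * z ^ (n + 1) / ((n : ℂ) + 1)‖ ≤ 1 / ((n : ℝ) + 1) ^ 2 := by
  rw [norm_div, norm_mul, norm_div, norm_succ_cast, norm_one, norm_pow]
  have : ‖z‖ ^ (n + 1) ≤ 1 := pow_le_one₀ (norm_nonneg _) hz
  calc 1 / ((n : ℝ) + 1) * ‖z‖ ^ (n + 1) / (n + 1) ≤ 1 / ((n : ℝ) + 1) * 1 / (n + 1) := by gcongr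
    _ = _ := by field_simp

theorem Li_cont : ContinuousOn Li (Metric.closedBall 0 1) := by
  refine continuousOn_tsum (u := fun n : ℕ => 1 / ((n : ℝ) + 1) ^ 2)
    (fun n => by fun_prop) summable_sq ?_
  intro n z hz
  exact Li_term_le n z (by simpa using hz)

/-- The path `1 - exp (-2 i t)`. -/
noncomputable def zz (t : ℝ) : ℂ := 1 - Complex.exp (-(2 * t * Complex.I))

theorem zz_eq (t : ℝ) : zz t = 2 * sin t * (Complex.exp (-(t * Complex.I)) * Complex.I) := by
  unfold zz
  rw [Complex.ofReal_sin, Complex.sin]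
  have h1 : Complex.exp (-(2 * t * Complex.I))
    = Complex.exp (-(t * Complex.I)) * Complex.exp (-(t * Complex.I)) := by
    rw [← Complex.exp_add]; ring_nf
  have h2 : Complex.exp (-(t * Complex.I)) * Complex.exp (t * Complex.I) = 1 := by
    rw [← Complex.exp_add]; simp
  rw [h1, neg_mul]
  linear_combination (Complex.exp (-(t * Complex.I)) * Complex.exp (t * Complex.I) -
    Complex.exp (-(t * Complex.I)) * Complex.exp (-(t * Complex.I))) * Complex.I_sq - h2

theorem zz_norm (t : ℝ) (h : 0 ≤ sin t) : ‖zz t‖ = 2 * sin t := by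
  rw [zz_eq, norm_mul, norm_mul, norm_mul, Complex.norm_I, Complex.norm_real, norm_of_nonneg h,
    ← neg_mul, ← Complex.ofReal_neg, Complex.norm_exp_ofReal_mul_I]
  simp

theorem zz_deriv (t : ℝ) :
    HasDerivAt zz (2 * Complex.I * Complex.exp (-(2 * t * Complex.I))) t := by
  have h : HasDerivAt (fun s : ℂ => 1 - Complex.exp (-(2 * s * Complex.I)))
      (2 * Complex.I * Complex.exp (-(2 * t * Complex.I))) (t : ℂ) := by
    have h1 : HasDerivAt (fun s : ℂ => -(2 * s * Complex.I)) (-(2 * 1 * Complex.I)) (t : ℂ) :=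
      (((hasDerivAt_id (t : ℂ)).const_mul 2).mul_const Complex.I).neg
    convert! h1.cexp.const_sub 1 using 1
    ring
  exact h.comp_ofReal

theorem Li_zz_deriv (t : ℝ) (h0 : 0 < t) (h1 : t < π / 6) :
    HasDerivAt (fun s => (Li (zz s)).im) (2 * (t / sin t) * cos t) t := by
  have hs : 0 < sin t := sin_pos_of_pos_of_lt_pi h0 (by linarith [pi_pos])
  have hs2 : sin t < 1 / 2 := by
    rw [← sin_pi_div_six]
    exact sin_lt_sin_of_lt_of_le_pi_div_two (by linarith) (by linarith [pi_pos]) h1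
  have hn := zz_norm t hs.le
  have hne : zz t ≠ 0 := by
    rw [← norm_pos_iff, hn]; linarith
  have h := (Li_deriv (zz t) (by rw [hn]; linarith) hne).comp t (zz_deriv t)
  have hlog : Complex.log (1 - zz t) = -(2 * t * Complex.I) := by
    have : 1 - zz t = Complex.exp (-(2 * t * Complex.I)) := by unfold zz; ring
    rw [this, Complex.log_exp]
    · simp; linarith
    · simp; linarith
  rw [hlog] at h
  have h2 := (Complex.imCLM.hasFDerivAt (x := Li (zz t))).comp_hasDerivAt t h
  convert! h2 using 1
  have hsc : (sin t : ℂ) ≠ 0 := by exact_mod_cast hs.ne'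
  have e : - -(2 * (t : ℂ) * Complex.I) / zz t * (2 * Complex.I * Complex.exp (-(2 * t * Complex.I)))
      = ((2 * (t / sin t) : ℝ) : ℂ) * (Complex.exp ((-t : ℝ) * Complex.I) * Complex.I) := by
    have h1 : Complex.exp (-(2 * t * Complex.I))
      = Complex.exp (-(t * Complex.I)) * Complex.exp (-(t * Complex.I)) := by
      rw [← Complex.exp_add]; ring_nf
    have hE := Complex.exp_ne_zero (-(t * Complex.I))
    rw [zz_eq, h1]
    push_cast
    rw [neg_mul]
    have hI := Complex.I_ne_zero
    field_simp
    try ring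
  rw [e, Complex.imCLM_apply, Complex.im_ofReal_mul]
  simp [Complex.exp_ofReal_mul_I_re, -Complex.ofReal_neg]

theorem main_eq : (Li (zz (π / 6))).im = 2 * FF (1 / 2) := by
  have hp := pi_pos
  let g : ℝ → ℝ := fun s => (Li (zz s)).im - 2 * FF (sin s)
  have hd : ∀ s ∈ Set.Ioo 0 (π / 6), HasDerivAt g 0 s := by
    intro s hs
    have h1 := Li_zz_deriv s hs.1 hs.2
    have h2 := ((FF_deriv s hs.1 (by linarith [hs.2])).comp s (hasDerivAt_sin s)).const_mul 2
    convert! h1.sub h2 using 1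
    ring
  have hcont : ContinuousOn g (Set.Icc 0 (π / 6)) := by
    apply ContinuousOn.sub
    · refine Complex.continuous_im.comp_continuousOn (Li_cont.comp
        (fun s _ => (zz_deriv s).continuousAt.continuousWithinAt) ?_)
      intro s hs
      have hs0 : 0 ≤ sin s := sin_nonneg_of_nonneg_of_le_pi hs.1 (by linarith [hs.2])
      have hs2 : sin s ≤ 1 / 2 := by
        rw [← sin_pi_div_six]
        exact sin_le_sin_of_le_of_le_pi_div_two (by linarith [hs.1]) (by linarith) hs.2
      rw [mem_closedBall_zero_iff, zz_norm s hs0]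
      linarith
    · intro s hs
      apply ContinuousAt.continuousWithinAt
      apply ContinuousAt.const_mul
      refine ContinuousAt.comp (g := FF) (f := sin) ?_ continuous_sin.continuousAt
      rcases hs.1.eq_or_lt with h | h
      · rw [← h, sin_zero]; exact FF_cont0
      · exact (FF_deriv s h (by linarith [hs.2])).continuousAt
  obtain ⟨c, hc, hc'⟩ := exists_hasDerivAt_eq_slope g (fun _ => 0) (by positivity) hcont hd
  have hg0 : g 0 = 0 := by simp [g, zz, Li, FF]
  rw [hg0, eq_div_iff (by linarith)] at hc'
  have : g (π / 6) = 0 := by linarith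
  simpa [g, sub_eq_zero] using this

theorem zz_end : zz (π / 6) = Complex.exp ((π / 3 : ℝ) * Complex.I) := by
  unfold zz
  have : -(2 * ((π / 6 : ℝ) : ℂ) * Complex.I) = ((-(π / 3) : ℝ) : ℂ) * Complex.I := by
    push_cast; ring
  rw [this]
  apply Complex.ext
  · rw [Complex.sub_re, Complex.exp_ofReal_mul_I_re, Complex.exp_ofReal_mul_I_re, cos_neg,
      cos_pi_div_three]
    norm_num
  · rw [Complex.sub_im, Complex.exp_ofReal_mul_I_im, Complex.exp_ofReal_mul_I_im, sin_neg]
    simp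

/-- `∑_{k≥0} C(2k,k)/(16^k·(2k+1)²) = Cl₂(π/3) = ∑_{n≥1} sin(nπ/3)/n²`. -/
theorem central_binom_sum_eq_clausen :
    (∑' k : ℕ, ((2 * k).choose k : ℝ) / (16^k * (2 * (k : ℝ) + 1)^2))
      = ∑' n : ℕ, Real.sin (((n : ℝ) + 1) * π / 3) / ((n : ℝ) + 1)^2 := by
  have hL : (∑' k : ℕ, ((2 * k).choose k : ℝ) / (16^k * (2 * (k : ℝ) + 1)^2)) = 2 * FF (1 / 2) := by
    unfold FF
    rw [← tsum_mul_left]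
    refine tsum_congr fun k => ?_
    unfold cc
    have : (16 : ℝ) ^ k = 4 ^ k * 2 ^ (2 * k) := by
      rw [pow_mul, ← mul_pow]; norm_num
    rw [this, pow_succ, one_div_pow]
    push_cast
    field_simp
    ring
  rw [hL, ← main_eq]
  unfold Li
  have hsum : Summable fun n : ℕ =>
      (1 / ((n : ℂ) + 1)) * (zz (π / 6)) ^ (n + 1) / ((n : ℂ) + 1) := by
    refine Summable.of_norm_bounded summable_sq fun n => Li_term_le n _ ?_
    rw [zz_end, Complex.norm_exp_ofReal_mul_I]
  rw [Complex.im_tsum hsum]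
  refine tsum_congr fun n => ?_
  rw [zz_end, ← Complex.exp_nat_mul]
  have e : (1 / ((n : ℂ) + 1)) *
      Complex.exp (((n + 1 : ℕ) : ℂ) * (((π / 3 : ℝ) : ℂ) * Complex.I)) / ((n : ℂ) + 1)
      = ((1 / ((n : ℝ) + 1) ^ 2 : ℝ) : ℂ) *
        Complex.exp (((((n : ℝ) + 1) * π / 3 : ℝ) : ℂ) * Complex.I) := by
    have : ((n + 1 : ℕ) : ℂ) * (((π / 3 : ℝ) : ℂ) * Complex.I)
      = ((((n : ℝ) + 1) * π / 3 : ℝ) : ℂ) * Complex.I := by push_cast; ring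
    rw [this]
    have h0 : (n : ℂ) + 1 ≠ 0 := Nat.cast_add_one_ne_zero _
    push_cast
    field_simp
  rw [e, Complex.im_ofReal_mul, Complex.exp_ofReal_mul_I_im]
  ring
end

section
/- Ramanujan's binomial sum evaluation: ∑_{k≥0} C(2k,k)/(2^{4k+1}·(2k+1)²) = (3√3/4)·∑_{k≥0} 1/(3k+1)² − π²/(6√3), where C(2k,k) denotes the central binomial coefficient. -/
open Real
open Filter Topology

noncomputable def cb (k : ℕ) : ℝ := (Nat.centralBinom k : ℝ) / 4 ^ k

lemma cb_succ (k : ℕ) : cb (k+1) * (2 * k + 2) = cb k * (2 * k + 1) := by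
  have h := Nat.succ_mul_centralBinom_succ k
  have h' : ((k:ℝ) + 1) * (Nat.centralBinom (k+1) : ℝ) = 2 * (2 * k + 1) * Nat.centralBinom k := by
    exact_mod_cast h
  unfold cb
  rw [pow_succ]
  field_simp
  linarith

lemma cb_nonneg (k : ℕ) : 0 ≤ cb k := by unfold cb; positivity

lemma cb_le_one (k : ℕ) : cb k ≤ 1 := by
  induction k with
  | zero => simp [cb]
  | succ k ih =>
    have h := cb_succ k
    have h0 := cb_nonneg k
    have : (0:ℝ) ≤ k := by positivity
    by_contra! hc
    nlinarith

lemma choose_neg_half (k : ℕ) : Ring.choose (-1/2 : ℝ) k = (-1)^k * cb k := by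
  induction k with
  | zero => simp [cb]
  | succ k ih =>
    have h1 := Ring.descPochhammer_eq_factorial_smul_choose (-1/2 : ℝ) k
    have h2 := Ring.descPochhammer_eq_factorial_smul_choose (-1/2 : ℝ) (k+1)
    rw [descPochhammer_succ_right, Polynomial.smeval_mul, h1, ih] at h2
    simp [Polynomial.smeval_sub, Polynomial.smeval_natCast, Nat.factorial_succ] at h2
    have h3 := cb_succ k
    have hf : (k.factorial : ℝ) ≠ 0 := by positivity
    have hk : ((k:ℝ)+1) ≠ 0 := by positivity
    apply mul_left_cancel₀ hk
    apply mul_left_cancel₀ hf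
    rw [pow_succ]
    linear_combination (-1) * h2 + (k.factorial:ℝ) * (-1)^k / 2 * h3

lemma hasSum_cb {y : ℝ} (hy : |y| < 1) : HasSum (fun k => cb k * y ^ k) (1 / √(1 - y)) := by
  have h := (Real.one_add_rpow_hasFPowerSeriesOnBall_zero (a := -1/2)).hasSum (y := -y)
    (by simpa [enorm_eq_nnnorm] using! hy)
  have hy' : 0 ≤ 1 - y := by have := abs_lt.1 hy; linarith
  convert! h using 1
  · ext k
    simp [choose_neg_half, binomialSeries, FormalMultilinearSeries.ofScalars]
    rw [neg_pow y k]
    have : ((-1:ℝ)^k)*(-1)^k = 1 := by rw [← mul_pow]; simp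
    linear_combination (-cb k * y^k) * this
  · rw [Real.sqrt_eq_rpow, one_div, ← Real.rpow_neg hy']
    norm_num [sub_eq_add_neg]

def Dm : Set ℝ := Set.Ioo (-(3/4)) (3/4)

lemma pow_bd {x : ℝ} (hx : x ∈ Dm) (k : ℕ) : |x| ^ (2*k) ≤ (9/16 : ℝ) ^ k := by
  rw [pow_mul]
  have := abs_lt.2 hx
  gcongr
  have := abs_nonneg x
  nlinarith

lemma sm_u : Summable (fun k : ℕ => (9/16:ℝ)^k) := summable_geometric_of_lt_one (by norm_num) (by norm_num)

lemma pow_deriv (c : ℝ) (k : ℕ) (x : ℝ) :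
    HasDerivAt (fun x => c * x^(2*k+1)) (c * (2*k+1) * x^(2*k)) x := by
  have := (hasDerivAt_pow (2*k+1) x).const_mul c
  convert! this using 1
  push_cast
  ring

noncomputable def As (x : ℝ) : ℝ := ∑' k : ℕ, (cb k / (2*k+1)) * x^(2*k+1)
noncomputable def Ps (x : ℝ) : ℝ := ∑' k : ℕ, (cb k / (2*k+1)^2) * x^(2*k+1)

lemma As_deriv {x : ℝ} (hx : x ∈ Dm) : HasDerivAt As (1 / √(1 - x^2)) x := by
  have h := hasDerivAt_tsum_of_isPreconnected (u := fun k : ℕ => (9/16:ℝ)^k) (t := Dm)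
    (g := fun (k:ℕ) x => (cb k / (2*k+1)) * x^(2*k+1))
    (g' := fun (k:ℕ) x => (cb k / (2*k+1)) * (2*k+1) * x^(2*k)) (y₀ := 0) (y := x) sm_u isOpen_Ioo isPreconnected_Ioo
    (fun k y _ => pow_deriv _ k y) ?_ (by constructor <;> norm_num) ?_ hx
  · convert! h using 1
    rw [← (hasSum_cb (y := x^2) ?_).tsum_eq]
    · congr 1; ext k
      have : (2*(k:ℝ)+1) ≠ 0 := by positivity
      rw [pow_mul]; field_simp
    · have := abs_lt.2 hx
      rw [abs_pow]
      have := abs_nonneg x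
      nlinarith
  · intro k y hy
    have : (2*(k:ℝ)+1) ≠ 0 := by positivity
    rw [div_mul_cancel₀ _ this, norm_mul, Real.norm_eq_abs, Real.norm_eq_abs, abs_pow, abs_of_nonneg (cb_nonneg k)]
    have := pow_bd hy k
    have := cb_le_one k
    have := cb_nonneg k
    have : 0 ≤ |y|^(2*k) := by positivity
    nlinarith
  · simp [summable_zero]

lemma As_eq {x : ℝ} (hx : x ∈ Dm) : As x = arcsin x := by
  have h : ∀ y ∈ Dm, HasDerivAt (fun y => As y - arcsin y) 0 y := by
    intro y hy
    have := (As_deriv hy).sub (Real.hasDerivAt_arcsin (x := y) (by have := hy.1; linarith) (by have := hy.2; linarith))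
    simpa using! this
  have h0 : (0:ℝ) ∈ Dm := by constructor <;> norm_num
  have := isOpen_Ioo.is_const_of_deriv_eq_zero (s := Dm) isPreconnected_Ioo
    (fun y hy => (h y hy).differentiableAt.differentiableWithinAt)
    (fun y hy => (h y hy).deriv) hx h0
  simp [As] at this ⊢
  linarith

lemma Ps_deriv {x : ℝ} (hx : x ∈ Dm) (hx0 : x ≠ 0) : HasDerivAt Ps (arcsin x / x) x := by
  have h := hasDerivAt_tsum_of_isPreconnected (u := fun k : ℕ => (9/16:ℝ)^k) (t := Dm)
    (g := fun (k:ℕ) x => (cb k / (2*k+1)^2) * x^(2*k+1))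
    (g' := fun (k:ℕ) x => (cb k / (2*k+1)^2) * (2*k+1) * x^(2*k)) (y₀ := 0) (y := x) sm_u isOpen_Ioo isPreconnected_Ioo
    (fun k y _ => pow_deriv _ k y) ?_ (by constructor <;> norm_num) ?_ hx
  · convert! h using 1
    rw [← As_eq hx, As, ← tsum_div_const]
    congr 1; ext k
    have : (2*(k:ℝ)+1) ≠ 0 := by positivity
    rw [pow_succ]; field_simp
  · intro k y hy
    have h1 : 1 ≤ (2*(k:ℝ)+1) := by linarith [(Nat.cast_nonneg k : (0:ℝ) ≤ k)]
    have : cb k / (2*(k:ℝ)+1)^2 * (2*k+1) = cb k / (2*k+1) := by field_simp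
    rw [this, norm_mul, Real.norm_eq_abs, Real.norm_eq_abs, abs_pow, abs_of_nonneg (div_nonneg (cb_nonneg k) (by linarith))]
    have := pow_bd hy k
    have := cb_le_one k
    have := cb_nonneg k
    have : cb k / (2*(k:ℝ)+1) ≤ 1 := by rw [div_le_one (by linarith)]; linarith
    have : 0 ≤ |y|^(2*k) := by positivity
    nlinarith
  · simp [summable_zero]

lemma Ps_zero : Ps 0 = 0 := by simp [Ps]

lemma Ps_cont0 : ContinuousOn Ps Dm := by
  unfold Ps
  refine continuousOn_tsum (u := fun k : ℕ => (9/16:ℝ)^k) (fun k => by fun_prop) sm_u ?_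
  intro k y hy
  have h1 : 1 ≤ (2*(k:ℝ)+1)^2 := by
    have : (0:ℝ) ≤ k := by positivity
    nlinarith
  rw [norm_mul, Real.norm_eq_abs, Real.norm_eq_abs, abs_pow, abs_of_nonneg (div_nonneg (cb_nonneg k) (by linarith)), pow_succ |y|]
  have := pow_bd hy k
  have := cb_le_one k
  have := cb_nonneg k
  have : cb k / (2*(k:ℝ)+1)^2 ≤ 1 := by rw [div_le_one (by linarith)]; linarith
  have : 0 ≤ |y|^(2*k) := by positivity
  have := abs_lt.2 hy
  have := abs_nonneg y
  have : |y|^(2*k)*|y| ≤ (9/16:ℝ)^k := by nlinarith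
  have : 0 ≤ |y|^(2*k)*|y| := by positivity
  nlinarith

lemma lhs_eq : (∑' k : ℕ, ((2 * k).choose k : ℝ) / (2^(4 * k + 1) * (2 * (k : ℝ) + 1)^2)) = Ps (1/2) := by
  unfold Ps cb
  congr 1; ext k
  rw [Nat.centralBinom]
  have : (2:ℝ)^(4*k+1) = 4^k * 2^(2*k+1) := by
    rw [show (4:ℝ) = 2^2 by norm_num, ← pow_mul, ← pow_add]; congr 1; ring
  rw [this, div_pow, one_pow]
  field_simp

noncomputable def Cl (x : ℝ) : ℝ := ∑' n : ℕ, sin (n * x) / (n:ℝ)^2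

lemma sm2 : Summable (fun n : ℕ => 1 / (n:ℝ)^2) := Real.summable_one_div_nat_pow.2 (by norm_num)

lemma sq_third {m : ℕ} : Summable (fun n : ℕ => 1 / (3*(n:ℝ)+((m+1:ℕ):ℝ))^2) := by
  have := sm2.comp_injective (i := fun n : ℕ => 3*n+(m+1)) (fun a b h => by simpa using h)
  refine this.congr fun n => ?_
  simp

lemma split2 {f : ℕ → ℝ} (hh : Summable f) : ∑' k, f k = ∑' k, f (2*k) + ∑' k, f (2*k+1) := by
  have h1 : Summable fun k => f (2*k) := hh.comp_injective (i := fun k => 2*k) (fun a b h => by simpa using h)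
  have h2 : Summable fun k => f (2*k+1) := hh.comp_injective (i := fun k => 2*k+1) (fun a b h => by simpa using h)
  exact (tsum_even_add_odd h1 h2).symm

lemma splitA : (∑' m : ℕ, 1 / (((1 + 6 * m : ℕ):ℝ))^2) + (∑' m : ℕ, 1 / (((4 + 6 * m : ℕ):ℝ))^2)
    = ∑' k : ℕ, 1 / (3 * (k : ℝ) + 1)^2 := by
  have hh : Summable (fun k : ℕ => 1 / (3 * (k : ℝ) + 1)^2) := by simpa using sq_third (m := 0)
  rw [split2 hh]
  congr 1 <;>
  · refine tsum_congr fun m => ?_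
    push_cast; congr 2; ring

lemma splitB : (∑' m : ℕ, 1 / (((2 + 6 * m : ℕ):ℝ))^2) + (∑' m : ℕ, 1 / (((5 + 6 * m : ℕ):ℝ))^2)
    = ∑' k : ℕ, 1 / (3 * (k : ℝ) + 2)^2 := by
  have hh : Summable (fun k : ℕ => 1 / (3 * (k : ℝ) + 2)^2) := by
    have := sq_third (m := 1); norm_num at this; simpa using this
  rw [split2 hh]
  congr 1 <;>
  · refine tsum_congr fun m => ?_
    push_cast; congr 2; ring

lemma Cl_third : Cl (π/3) = √3 / 2 * (3/2 * (2 * (∑' k : ℕ, 1 / (3 * (k : ℝ) + 1)^2) - 8/9 * (π^2/6))) := by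
  have hs : Summable (fun n : ℕ => sin (n * (π/3)) * (1 / (n:ℝ)^2)) := by
    refine Summable.of_norm_bounded sm2 fun n => ?_
    rw [← div_eq_mul_one_div]
    rw [norm_div, norm_pow, Real.norm_natCast]
    gcongr
    exact abs_sin_le_one _
  have hsin : ∀ (j m : ℕ), sin (((j + 6 * m : ℕ):ℝ) * (π/3)) = sin (j * (π/3)) := by
    intro j m
    rw [← sin_add_nat_mul_two_pi (j * (π/3)) m]; congr 1; push_cast; ring
  have hζ := hasSum_zeta_two.tsum_eq
  have h3 := Nat.sumByResidueClasses sm2 3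
  have h6 := Nat.sumByResidueClasses hs 6
  rw [hζ] at h3
  simp only [hsin] at h6
  have hu6 : ∀ f : ZMod 6 → ℝ, ∑ j, f j = f 0 + f 1 + f 2 + f 3 + f 4 + f 5 := by
    intro f; exact Fin.sum_univ_six f
  have hu3 : ∀ f : ZMod 3 → ℝ, ∑ j, f j = f 0 + f 1 + f 2 := by
    intro f; exact Fin.sum_univ_three f
  rw [hu6] at h6
  rw [hu3] at h3
  have v0 : (0 : ZMod 6).val = 0 := rfl
  have v1 : (1 : ZMod 6).val = 1 := rfl
  have v2 : (2 : ZMod 6).val = 2 := rfl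
  have v3 : (3 : ZMod 6).val = 3 := rfl
  have v4 : (4 : ZMod 6).val = 4 := rfl
  have v5 : (5 : ZMod 6).val = 5 := rfl
  have w0 : (0 : ZMod 3).val = 0 := rfl
  have w1 : (1 : ZMod 3).val = 1 := rfl
  have w2 : (2 : ZMod 3).val = 2 := rfl
  rw [v0, v1, v2, v3, v4, v5] at h6
  rw [w0, w1, w2] at h3
  have s1 : sin (((1:ℕ):ℝ) * (π/3)) = √3/2 := by simp
  have s2 : sin (((2:ℕ):ℝ) * (π/3)) = √3/2 := by
    rw [← sin_pi_div_three, ← sin_pi_sub]; congr 1; push_cast; ring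
  have s3 : sin (((3:ℕ):ℝ) * (π/3)) = 0 := by
    rw [← sin_pi]; congr 1; push_cast; ring
  have s4 : sin (((4:ℕ):ℝ) * (π/3)) = -(√3/2) := by
    rw [← sin_pi_div_three, ← sin_add_pi]; congr 1; push_cast; ring
  have s5 : sin (((5:ℕ):ℝ) * (π/3)) = -(√3/2) := by
    rw [← sin_pi_div_three, ← sin_neg, ← sin_add_two_pi (-(π/3))]; congr 1; push_cast; ring
  rw [s1, s2, s3, s4, s5] at h6
  simp only [tsum_mul_left] at h6
  -- sums
  set A := ∑' k : ℕ, 1 / (3 * (k : ℝ) + 1)^2 with hA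
  set B := ∑' k : ℕ, 1 / (3 * (k : ℝ) + 2)^2 with hB
  set S : ℕ → ℝ := fun j => ∑' m : ℕ, 1 / (((j + 6 * m : ℕ):ℝ))^2 with hS
  have eA : S 1 + S 4 = A := splitA
  have eB : S 2 + S 5 = B := splitB
  have e2 : S 2 = A / 4 := by
    rw [hA, ← tsum_div_const]
    refine tsum_congr fun m => ?_
    push_cast; field_simp; ring
  have e4 : S 4 = B / 4 := by
    rw [hB, ← tsum_div_const]
    refine tsum_congr fun m => ?_
    push_cast; field_simp; ring
  have eζ : π^2/6 = (π^2/6)/9 + A + B := by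
    rw [h3]
    congr 1
    · congr 1
      · rw [← h3, ← hζ, ← tsum_div_const]
        refine tsum_congr fun m => ?_
        push_cast; rw [zero_add, mul_pow, div_div]; congr 1; ring
      · refine tsum_congr fun m => ?_
        push_cast; congr 2; ring
    · refine tsum_congr fun m => ?_
      push_cast; congr 2; ring
  have h6' : Cl (π/3) = √3/2 * S 1 + √3/2 * S 2 - √3/2 * S 4 - √3/2 * S 5 := by
    unfold Cl
    rw [tsum_congr (fun n : ℕ => div_eq_mul_one_div (sin (n * (π/3))) ((n:ℝ)^2)), h6]
    simp [hS]; ring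
  rw [h6']
  have : S 1 + S 2 - S 4 - S 5 = 3/2 * (2 * A - 8/9*(π^2/6)) := by linarith
  rw [← this]; ring

lemma Cl_cont : Continuous Cl := by
  unfold Cl
  refine continuous_tsum (fun n => by fun_prop) sm2 ?_
  intro n x
  rw [norm_div, norm_pow, Real.norm_natCast]
  gcongr
  exact abs_sin_le_one _

noncomputable def Clr (r x : ℝ) : ℝ := ∑' n : ℕ, r^n * (sin (n * x) / (n:ℝ)^2)

noncomputable def Nm (r x : ℝ) : ℝ := 1 - 2 * r * cos x + r^2

lemma Clr_deriv {r : ℝ} (h0 : 0 ≤ r) (h1 : r < 1) (x : ℝ) :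
    HasDerivAt (Clr r) (-(1/2) * log (Nm r x)) x := by
  have h := hasDerivAt_tsum (u := fun n : ℕ => r^n)
    (g := fun (n:ℕ) x => r^n * (sin (n * x) / (n:ℝ)^2))
    (g' := fun (n:ℕ) x => r^n * (cos (n * x) * n / (n:ℝ)^2)) (y₀ := 0)
    (summable_geometric_of_lt_one h0 h1) ?_ ?_ ?_ x
  · convert! h using 1
    set z : ℂ := r * Complex.exp (x * Complex.I) with hz
    have hnz : ‖z‖ = r := by
      rw [hz, norm_mul, Complex.norm_exp_ofReal_mul_I, mul_one, Complex.norm_real, Real.norm_of_nonneg h0]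
    have hl := Complex.hasSum_re (Complex.hasSum_taylorSeries_neg_log (z := z) (by rw [hnz]; exact h1))
    rw [show -(1/2) * log (Nm r x) = (-Complex.log (1 - z)).re from ?_, ← hl.tsum_eq]
    · refine tsum_congr fun n => ?_
      have hzn : z^n = ((r^n : ℝ) : ℂ) * Complex.exp ((n * x : ℝ) * Complex.I) := by
        rw [hz, mul_pow, ← Complex.exp_nat_mul]; push_cast; ring_nf
      have : (z ^ n / (n:ℂ)).re = (z^n).re / n := by
        rw [← Complex.ofReal_natCast, Complex.div_ofReal_re]
      rw [this, hzn, Complex.re_ofReal_mul, Complex.exp_ofReal_mul_I_re]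
      rcases Nat.eq_zero_or_pos n with rfl | hn
      · simp
      · have : (n:ℝ) ≠ 0 := by positivity
        field_simp
    · rw [Complex.neg_re, Complex.log_re]
      have : Nm r x = ‖1 - z‖^2 := by
        rw [Complex.sq_norm, Complex.normSq_apply, hz]
        simp [Complex.exp_ofReal_mul_I_re, Complex.exp_ofReal_mul_I_im, Nm]
        have := sin_sq_add_cos_sq x
        linear_combination (-r^2) * this
      rw [this, log_pow]; push_cast; ring
  · intro n y
    have h := ((hasDerivAt_id y).const_mul (n:ℝ)).sin
    have := (h.div_const ((n:ℝ)^2)).const_mul (r^n)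
    simpa using! this
  · intro n y
    rw [norm_mul, Real.norm_of_nonneg (by positivity : 0 ≤ r^n)]
    apply mul_le_of_le_one_right (by positivity)
    rcases Nat.eq_zero_or_pos n with rfl | hn
    · simp
    · have hn' : (1:ℝ) ≤ n := by exact_mod_cast hn
      rw [pow_two, mul_div_mul_right _ _ (by positivity), norm_div, Real.norm_natCast, div_le_one (by positivity)]
      exact (abs_cos_le_one _).trans hn'
  · simp [summable_zero]

lemma Nm_eq (r x : ℝ) : Nm r x = (r - cos x)^2 + sin x^2 := by
  have := sin_sq_add_cos_sq x
  unfold Nm; linear_combination (-1) * this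

lemma Nm_one {x : ℝ} : Nm 1 x = (2 * sin (x/2))^2 := by
  have h := cos_sq' (x/2)
  have h2 := cos_two_mul (x/2)
  rw [show 2 * (x/2) = x by ring] at h2
  unfold Nm; rw [h2]; linear_combination (-4) * h

lemma Clr_tendsto (x : ℝ) : Tendsto (fun r => Clr r x) (𝓝[<] 1) (𝓝 (Cl x)) := by
  unfold Clr Cl
  refine tendsto_tsum_of_dominated_convergence sm2 ?_ ?_
  · intro n
    have : Continuous fun r : ℝ => r^n * (sin (n * x) / (n:ℝ)^2) := by fun_prop
    have := (this.tendsto 1).mono_left (nhdsWithin_le_nhds (s := Set.Iio 1))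
    simpa using this
  · have : Set.Ioo (0:ℝ) 1 ∈ 𝓝[<] (1:ℝ) := Ioo_mem_nhdsLT (by norm_num)
    filter_upwards [this] with r hr n
    rw [norm_mul, norm_div, norm_pow, norm_pow, Real.norm_natCast, Real.norm_of_nonneg hr.1.le]
    have h1 : r^n ≤ 1 := pow_le_one₀ hr.1.le hr.2.le
    have h2 : ‖sin (n*x)‖ / (n:ℝ)^2 ≤ 1 / (n:ℝ)^2 := by
      gcongr; exact abs_sin_le_one _
    have h3 : 0 ≤ r^n := pow_nonneg hr.1.le n
    have h4 : 0 ≤ ‖sin (n*x)‖ / (n:ℝ)^2 := by positivity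
    nlinarith

lemma Cl_sub {a b : ℝ} (ha : 0 < a) (hab : a ≤ b) (hb : b ≤ π/2) :
    Cl b - Cl a = ∫ x in a..b, -(1/2) * log (Nm 1 x) := by
  have hsa : 0 < sin a := sin_pos_of_pos_of_lt_pi ha (by linarith [pi_pos])
  have hsin : ∀ x ∈ Set.Icc a b, sin a ≤ sin x := fun x hx =>
    sin_le_sin_of_le_of_le_pi_div_two (by linarith [pi_pos]) (hx.2.trans hb) hx.1
  have hNm : ∀ r, ∀ x ∈ Set.Icc a b, sin a ^2 ≤ Nm r x := by
    intro r x hx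
    rw [Nm_eq]
    have := hsin x hx
    nlinarith [sq_nonneg (r - cos x)]
  have hev : Set.Ioo (0:ℝ) 1 ∈ 𝓝[<] (1:ℝ) := Ioo_mem_nhdsLT (by norm_num)
  have hcont : ∀ r, ContinuousOn (fun x => -(1/2) * log (Nm r x)) (Set.Icc a b) := by
    intro r
    refine continuousOn_const.mul (ContinuousOn.log ?_ ?_)
    · unfold Nm; fun_prop
    · intro x hx
      have := hNm r x hx
      have : 0 < sin a^2 := by positivity
      linarith
  have hIoc : ∀ x, x ∈ Set.uIoc a b → x ∈ Set.Icc a b := by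
    intro x hx; rw [Set.uIoc_of_le hab] at hx; exact Set.Ioc_subset_Icc_self hx
  have t1 : Tendsto (fun r => ∫ x in a..b, -(1/2) * log (Nm r x)) (𝓝[<] 1)
      (𝓝 (∫ x in a..b, -(1/2) * log (Nm 1 x))) := by
    refine intervalIntegral.tendsto_integral_filter_of_dominated_convergence
      (fun _ => |log (sin a^2)| + |log 4|) ?_ ?_ (by simp) ?_
    · refine Eventually.of_forall fun r => ?_
      refine ContinuousOn.aestronglyMeasurable ((hcont r).mono hIoc) measurableSet_uIoc
    · filter_upwards [hev] with r hr
      refine Eventually.of_forall fun x hx => ?_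
      have h1 := hNm r x (hIoc x hx)
      have h0 : 0 < sin a^2 := by positivity
      have h2 : Nm r x ≤ 4 := by
        unfold Nm
        have := neg_one_le_cos x
        have := hr.1
        have := hr.2
        nlinarith
      have l1 := log_le_log h0 h1
      have l2 := log_le_log (h0.trans_le h1) h2
      have a1 := neg_abs_le (log (sin a^2))
      have a2 := le_abs_self (log 4)
      have a3 := abs_nonneg (log (sin a^2))
      have a4 := abs_nonneg (log 4)
      rw [Real.norm_eq_abs, abs_le]
      constructor <;> linarith
    · refine Eventually.of_forall fun x hx => ?_
      have hc : Continuous fun r => Nm r x := by unfold Nm; fun_prop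
      have h1 := hNm 1 x (hIoc x hx)
      have h0 : 0 < sin a^2 := by positivity
      have := ((hc.tendsto 1).log (by linarith)).const_mul (-(1/2) : ℝ)
      exact this.mono_left nhdsWithin_le_nhds
  have t2 : Tendsto (fun r => Clr r b - Clr r a) (𝓝[<] 1) (𝓝 (Cl b - Cl a)) :=
    (Clr_tendsto b).sub (Clr_tendsto a)
  refine tendsto_nhds_unique t2 (t1.congr' ?_)
  filter_upwards [hev] with r hr
  refine intervalIntegral.integral_eq_sub_of_hasDerivAt (fun x _ => Clr_deriv hr.1.le hr.2 x) ?_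
  apply ContinuousOn.intervalIntegrable
  rw [Set.uIcc_of_le hab]; exact hcont r

lemma Cl_deriv {x : ℝ} (h0 : 0 < x) (h1 : x < π/2) : HasDerivAt Cl (- log (2 * sin (x/2))) x := by
  have hpos : ∀ y ∈ Set.Ioo 0 (π/2), 0 < sin (y/2) := fun y hy =>
    sin_pos_of_pos_of_lt_pi (by linarith [hy.1]) (by linarith [hy.2, pi_pos])
  have hc : ContinuousOn (fun y => -(1/2) * log (Nm 1 y)) (Set.Ioo 0 (π/2)) := by
    refine continuousOn_const.mul (ContinuousOn.log ?_ ?_)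
    · unfold Nm; fun_prop
    · intro y hy
      rw [Nm_one]
      have := hpos y hy
      positivity
  have hsub : Set.uIcc (x/2) x ⊆ Set.Ioo 0 (π/2) := by
    rw [Set.uIcc_of_le (by linarith)]
    intro y hy; exact ⟨by linarith [hy.1], by linarith [hy.2]⟩
  have hx : x ∈ Set.Ioo 0 (π/2) := ⟨h0, h1⟩
  have d := intervalIntegral.integral_hasDerivAt_right (a := x/2) (b := x)
    (hc.mono hsub).intervalIntegrable
    (hc.stronglyMeasurableAtFilter isOpen_Ioo x hx) (hc.continuousAt (isOpen_Ioo.mem_nhds hx))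
  have d2 := d.const_add (Cl (x/2))
  have hv : -(1/2) * log (Nm 1 x) = - log (2 * sin (x/2)) := by
    rw [Nm_one, log_pow]; push_cast; ring
  rw [hv] at d2
  refine d2.congr_of_eventuallyEq ?_
  filter_upwards [Ioo_mem_nhds (show x/2 < x by linarith) h1] with y hy
  rw [← Cl_sub (by linarith) hy.1.le hy.2.le]; ring


lemma glog_cont : ContinuousOn (fun t : ℝ => t * log (2 * sin t)) (Set.Icc 0 (π/6)) := by
  have hs : ∀ t ∈ Set.Icc 0 (π/6), 0 < sinc t := by
    intro t ht
    rcases eq_or_lt_of_le ht.1 with h | h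
    · simp [← h]
    · rw [sinc_of_ne_zero h.ne']
      exact div_pos (sin_pos_of_pos_of_lt_pi h (by linarith [ht.2, pi_pos])) h
  have hc : ContinuousOn (fun t : ℝ => t * log t + t * log (2 * sinc t)) (Set.Icc 0 (π/6)) := by
    refine ContinuousOn.add continuous_mul_log.continuousOn (continuousOn_id.mul (ContinuousOn.log ?_ ?_))
    · exact (continuous_const.mul continuous_sinc).continuousOn
    · intro t ht
      have := hs t ht
      positivity
  refine hc.congr fun t ht => ?_
  rcases eq_or_lt_of_le ht.1 with h | h
  · simp [← h]
  · have h1 := hs t ht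
    have : 2 * sin t = t * (2 * sinc t) := by
      rw [sinc_of_ne_zero h.ne']; field_simp
    simp only [this]
    rw [log_mul h.ne' (by positivity)]; ring

lemma Ps_half : Ps (1/2) = 1/2 * Cl (π/3) := by
  let E : ℝ → ℝ := fun t => Ps (sin t) - (t * log (2 * sin t) + 1/2 * Cl (2 * t))
  have hmem : ∀ t ∈ Set.Icc 0 (π/6), sin t ∈ Dm := by
    intro t ht
    have h1 : 0 ≤ sin t := sin_nonneg_of_nonneg_of_le_pi ht.1 (by linarith [ht.2, pi_pos])
    have h2 : sin t ≤ sin (π/6) := sin_le_sin_of_le_of_le_pi_div_two (by linarith [ht.1, pi_pos]) (by linarith [pi_pos]) ht.2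
    rw [sin_pi_div_six] at h2
    constructor <;> linarith
  have hE : ContinuousOn E (Set.Icc 0 (π/6)) := by
    refine ContinuousOn.sub (Ps_cont0.comp continuous_sin.continuousOn hmem) (glog_cont.add ?_)
    exact (continuous_const.mul (Cl_cont.comp (continuous_const.mul continuous_id))).continuousOn
  have hd : ∀ t ∈ Set.Ioo 0 (π/6), HasDerivAt E 0 t := by
    intro t ht
    have hs : 0 < sin t := sin_pos_of_pos_of_lt_pi ht.1 (by linarith [ht.2, pi_pos])
    have d1 := (Ps_deriv (hmem t ⟨ht.1.le, ht.2.le⟩) hs.ne').comp t (hasDerivAt_sin t)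
    have d2 := (hasDerivAt_id t).mul (((hasDerivAt_sin t).const_mul 2).log (by positivity))
    have d3 := ((Cl_deriv (x := 2 * t) (by linarith [ht.1]) (by linarith [ht.2, pi_pos])).comp t
      ((hasDerivAt_id t).const_mul 2)).const_mul (1/2)
    convert! d1.sub (d2.add d3) using 1
    rw [arcsin_sin (by linarith [ht.1, pi_pos]) (by linarith [ht.2, pi_pos]),
      show 2 * t / 2 = t by ring]
    simp only [id]
    field_simp
    ring
  obtain ⟨c, -, hc⟩ := exists_hasDerivAt_eq_slope E (fun _ => 0) (by positivity : (0:ℝ) < π/6) hE hd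
  have h6 : π/6 - 0 ≠ 0 := by rw [sub_zero]; positivity
  rw [eq_div_iff h6, zero_mul] at hc
  have e0 : E 0 = 0 := by simp [E, Ps_zero, Cl]
  have e1 : E (π/6) = Ps (1/2) - 1/2 * Cl (π/3) := by
    simp only [E, sin_pi_div_six]
    rw [show 2 * (π/6) = π/3 by ring]
    norm_num
  linarith

/-- Ramanujan's binomial sum:
`∑_{k≥0} C(2k,k)/(2^{4k+1}·(2k+1)²) = (3√3/4)·∑_{k≥0} 1/(3k+1)² − π²/(6√3)`. -/
theorem ramanujan_binomial_sum :
    (∑' k : ℕ, ((2 * k).choose k : ℝ) / (2^(4 * k + 1) * (2 * (k : ℝ) + 1)^2))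
      = (3 * Real.sqrt 3 / 4) * (∑' k : ℕ, 1 / (3 * (k : ℝ) + 1)^2)
        - π^2 / (6 * Real.sqrt 3) := by
  rw [lhs_eq, Ps_half, Cl_third]
  have h3 : √3 * √3 = 3 := mul_self_sqrt (by norm_num)
  have : π^2 / (6 * √3) = √3 * π^2 / 18 := by
    rw [div_eq_div_iff (by positivity) (by norm_num)]
    linear_combination (-6 * π^2) * h3
  rw [this]; ring
end

section
/- The alternating central-binomial sum ∑_{k≥0} (−1)^k·C(2k,k)/(16^k·(2k+1)²) equals π²/10, where C(2k,k) denotes the central binomial coefficient. -/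
open Real

theorem acb_const {f : ℝ → ℝ} {a b : ℝ} (hab : a < b) (hc : ContinuousOn f (Set.Icc a b))
    (hd : ∀ x ∈ Set.Ioo a b, HasDerivAt f 0 x) : f b = f a := by
  obtain ⟨c, hc, h⟩ := exists_hasDerivAt_eq_slope f (fun _ => 0) hab hc hd
  have : b - a ≠ 0 := by linarith
  field_simp at h
  linarith

theorem acb_summable {a : ℕ → ℝ} {n : ℕ → ℕ} (ha : ∀ k, |a k| ≤ k + 1) (hn : ∀ k, k ≤ n k)
    {x : ℝ} (hx : |x| < 1) : Summable (fun k => a k * x ^ (n k)) := by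
  have h1 := summable_pow_mul_geometric_of_norm_lt_one (R := ℝ) 1 (r := |x|) (by simpa using hx)
  have h0 := summable_pow_mul_geometric_of_norm_lt_one (R := ℝ) 0 (r := |x|) (by simpa using hx)
  refine Summable.of_norm_bounded (h1.add h0) fun k => ?_
  rw [norm_mul, norm_pow, Real.norm_eq_abs, Real.norm_eq_abs]
  have : |x| ^ n k ≤ |x| ^ k := pow_le_pow_of_le_one (abs_nonneg _) hx.le (hn k)
  calc |a k| * |x| ^ n k ≤ (k + 1) * |x| ^ k := by gcongr; exact ha k
    _ = _ := by ring

theorem acb_deriv {a : ℕ → ℝ} {n : ℕ → ℕ} (ha : ∀ k, |a k| ≤ k + 1) (hn : ∀ k, k ≤ n k)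
    {x : ℝ} (hx : |x| < 1) :
    HasDerivAt (fun y => ∑' k, a k * (y ^ (n k + 1) / ((n k : ℝ) + 1)))
      (∑' k, a k * x ^ (n k)) x := by
  obtain ⟨r, hxr, hr⟩ := exists_between hx
  have hr0 : 0 ≤ r := (abs_nonneg x).trans hxr.le
  have hs := (acb_summable (a := fun k => (k : ℝ) + 1) (n := n) (x := r)
    (fun k => by rw [abs_of_nonneg (by positivity)]) hn (by rwa [abs_of_nonneg hr0]))
  refine hasDerivAt_tsum_of_isPreconnected (g := fun k (y : ℝ) => a k * (y ^ (n k + 1) / ((n k : ℝ) + 1)))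
    (g' := fun k (y : ℝ) => a k * y ^ (n k)) (t := Set.Ioo (-r) r) (y₀ := 0) hs isOpen_Ioo
    isPreconnected_Ioo (fun k y _ => ?_) (fun k y hy => ?_) ?_ ?_ ?_
  · have h := ((hasDerivAt_pow (n k + 1) y).div_const ((n k : ℝ) + 1)).const_mul (a k)
    convert! h using 1
    have : (n k : ℝ) + 1 ≠ 0 := by positivity
    rw [Nat.add_sub_cancel]
    push_cast
    field_simp
  · rw [norm_mul, norm_pow, Real.norm_eq_abs, Real.norm_eq_abs]
    have : |y| ≤ r := (abs_lt.2 hy).le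
    gcongr
    exact ha k
  · have := abs_lt.1 hxr
    constructor <;> linarith
  · simp
  · exact abs_lt.1 hxr

noncomputable def acbLi (y : ℝ) : ℝ :=
  ∑' k : ℕ, (1 / ((k : ℝ) + 1)) * (y ^ (k + 1) / ((k : ℝ) + 1))

theorem acbLi_deriv {x : ℝ} (hx : |x| < 1) (h0 : x ≠ 0) :
    HasDerivAt acbLi (-log (1 - x) / x) x := by
  have h := acb_deriv (a := fun k => 1 / ((k : ℝ) + 1)) (n := fun k => k) (fun k => by
    rw [abs_of_nonneg (by positivity)]
    rw [div_le_iff₀ (by positivity)]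
    have : (0 : ℝ) ≤ k := by positivity
    nlinarith) (fun k => le_rfl) hx
  convert! h using 1
  rw [← (hasSum_pow_div_log_of_abs_lt_one hx).tsum_eq, div_eq_iff h0, ← tsum_mul_right]
  refine tsum_congr fun k => ?_
  ring

theorem acbLi_summ : Summable (fun k : ℕ => 1 / ((k : ℝ) + 1) ^ 2) := by
  have := (summable_nat_add_iff 1).2 hasSum_zeta_two.summable
  simpa using this

theorem acbLi_cont : ContinuousOn acbLi (Set.Icc (-1) 1) := by
  refine continuousOn_tsum (u := fun k : ℕ => 1 / ((k : ℝ) + 1) ^ 2) (fun k => by fun_prop)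
    acbLi_summ fun k x hx => ?_
  have h1 : |x| ^ (k + 1) ≤ 1 := pow_le_one₀ (abs_nonneg _) (abs_le.2 hx)
  rw [norm_mul, norm_div (x ^ (k + 1)), norm_pow, Real.norm_eq_abs x,
    Real.norm_of_nonneg (by positivity : (0 : ℝ) ≤ 1 / ((k : ℝ) + 1)),
    Real.norm_of_nonneg (by positivity : (0 : ℝ) ≤ ((k : ℝ) + 1))]
  calc 1 / ((k : ℝ) + 1) * (|x| ^ (k + 1) / (k + 1)) ≤ 1 / ((k : ℝ) + 1) * (1 / (k + 1)) := by
        gcongr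
    _ = _ := by field_simp

theorem acbLi_zero : acbLi 0 = 0 := by simp [acbLi]

theorem acbLi_one : acbLi 1 = π ^ 2 / 6 := by
  have h := hasSum_zeta_two
  rw [← hasSum_nat_add_iff' 1] at h
  simp at h
  rw [← h.tsum_eq, acbLi]
  refine tsum_congr fun k => ?_
  simp
  field_simp

theorem acbLi_dup {x : ℝ} (h0 : 0 < x) (h1 : x < 1) :
    acbLi x + acbLi (-x) - acbLi (x ^ 2) / 2 = 0 := by
  have := acb_const (f := fun y => acbLi y + acbLi (-y) - acbLi (y ^ 2) / 2) h0 ?_ ?_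
  · simpa [acbLi_zero] using this
  · refine ContinuousOn.sub (ContinuousOn.add ?_ ?_) (ContinuousOn.div_const ?_ _)
    · exact acbLi_cont.mono fun y hy => ⟨by linarith [hy.1], by linarith [hy.2]⟩
    · exact acbLi_cont.comp (by fun_prop) fun y hy => ⟨by linarith [hy.2], by linarith [hy.1]⟩
    · exact acbLi_cont.comp (by fun_prop) fun y hy =>
        ⟨by nlinarith [hy.1], by nlinarith [hy.1, hy.2]⟩
  · intro y ⟨hy0, hy1⟩
    have hy2 : y ^ 2 < 1 := by nlinarith
    have d1 := acbLi_deriv (x := y) (by rw [abs_of_pos hy0]; linarith) hy0.ne'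
    have d2 := (acbLi_deriv (x := -y) (by rw [abs_neg, abs_of_pos hy0]; linarith)
      (by linarith)).comp y (hasDerivAt_neg y)
    have d3 := (acbLi_deriv (x := y ^ 2) (by rw [abs_of_pos (by positivity)]; linarith)
      (by positivity)).comp y (hasDerivAt_pow 2 y)
    convert! (d1.add d2).sub (d3.div_const 2) using 1
    have : log (1 - y ^ 2) = log (1 - y) + log (1 + y) := by
      rw [← log_mul (by linarith) (by linarith)]; congr 1; ring
    rw [this]
    simp
    field_simp
    ring

theorem acbLi_landen {x : ℝ} (h0 : 0 < x) (h1 : x < 1 / 2) :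
    acbLi x + acbLi (-x / (1 - x)) + log (1 - x) ^ 2 / 2 = 0 := by
  have := acb_const (f := fun y => acbLi y + acbLi (-y / (1 - y)) + log (1 - y) ^ 2 / 2) h0 ?_ ?_
  · simpa [acbLi_zero] using this
  · refine ContinuousOn.add (ContinuousOn.add ?_ ?_) (ContinuousOn.div_const ?_ _)
    · exact acbLi_cont.mono fun y hy => ⟨by linarith [hy.1], by linarith [hy.2]⟩
    · refine acbLi_cont.comp (ContinuousOn.div (by fun_prop) (by fun_prop)
        fun y hy => by linarith [hy.2]) fun y hy => ⟨?_, ?_⟩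
      · rw [le_div_iff₀ (by linarith [hy.2])]; linarith [hy.2]
      · rw [div_le_iff₀ (by linarith [hy.2])]; linarith [hy.2]
    · refine ContinuousOn.pow (ContinuousOn.log (by fun_prop) fun y hy => by linarith [hy.2]) _
  · intro y ⟨hy0, hy1⟩
    have hy : 0 < 1 - y := by linarith
    have d1 := acbLi_deriv (x := y) (by rw [abs_of_pos hy0]; linarith) hy0.ne'
    have dl : HasDerivAt (fun y : ℝ => 1 - y) (-1) y := by
      simpa using (hasDerivAt_id y).const_sub 1
    have d2 := (acbLi_deriv (x := -y / (1 - y)) (by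
        rw [abs_lt]
        constructor
        · rw [lt_div_iff₀ hy]; linarith
        · rw [div_lt_iff₀ hy]; linarith)
      (div_ne_zero (by linarith) hy.ne')).comp y ((hasDerivAt_neg y).div dl hy.ne')
    have d3 := ((dl.log hy.ne').pow 2).div_const 2
    convert! (d1.add d2).add d3 using 1
    have : log (1 - -y / (1 - y)) = - log (1 - y) := by
      rw [← log_inv]; congr 1; field_simp; ring
    rw [this]
    simp
    field_simp
    ring

theorem acbLi_refl {x : ℝ} (h0 : 0 < x) (h1 : x < 1) :
    acbLi x + acbLi (1 - x) + log x * log (1 - x) = π ^ 2 / 6 := by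
  have := acb_const (f := fun y => acbLi y + acbLi (1 - y) + log y * log (1 - y)) h0 ?_ ?_
  · simpa [acbLi_zero, acbLi_one] using this
  · refine ContinuousOn.add (ContinuousOn.add ?_ ?_) ?_
    · exact acbLi_cont.mono fun y hy => ⟨by linarith [hy.1], by linarith [hy.2]⟩
    · exact acbLi_cont.comp (by fun_prop) fun y hy => ⟨by linarith [hy.2], by linarith [hy.1]⟩
    · have hd : ∀ y : ℝ, y < 1 → DifferentiableAt ℝ (fun y : ℝ => log (1 - y)) y := fun y hy =>
        DifferentiableAt.log (by fun_prop) (by linarith)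
      have hc : ContinuousOn (dslope (fun y : ℝ => log (1 - y)) 0) (Set.Iio 1) := by
        rw [continuousOn_dslope (Iio_mem_nhds one_pos)]
        exact ⟨fun y hy => (hd y hy).continuousAt.continuousWithinAt, hd 0 one_pos⟩
      have hc2 := (continuous_mul_log.continuousOn (s := Set.Icc 0 x)).mul
        (hc.mono fun y hy => lt_of_le_of_lt hy.2 h1)
      refine hc2.congr fun y _ => ?_
      have := sub_smul_dslope (fun y : ℝ => log (1 - y)) 0 y
      simp at this
      simp only [Pi.mul_apply]
      rw [← this]; ring
  · intro y ⟨hy0, hy1⟩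
    have hy : 0 < 1 - y := by linarith
    have d1 := acbLi_deriv (x := y) (by rw [abs_of_pos hy0]; linarith) hy0.ne'
    have dl : HasDerivAt (fun y : ℝ => 1 - y) (-1) y := by
      simpa using (hasDerivAt_id y).const_sub 1
    have d2 := (acbLi_deriv (x := 1 - y) (by rw [abs_of_pos hy]; linarith) hy.ne').comp y dl
    have d3 := (hasDerivAt_log hy0.ne').mul (dl.log hy.ne')
    convert! (d1.add d2).add d3 using 1
    simp
    field_simp
    ring

/-- The dilogarithm at the inverse golden ratio. -/
theorem acbLi_golden {x : ℝ} (h0 : 0 < x) (h : x ^ 2 = 1 - x) :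
    acbLi x = π ^ 2 / 10 - log x ^ 2 := by
  have hx1 : x < 1 := by nlinarith
  have hx2 : x ^ 2 < 1 / 2 := by nlinarith
  have e1 := acbLi_refl h0 hx1
  have e2 := acbLi_dup h0 hx1
  have e3 := acbLi_landen (x := x ^ 2) (by positivity) hx2
  have hx : 1 - x ^ 2 = x := by linarith
  have hxx : -x ^ 2 / x = -x := by field_simp
  rw [hx, hxx] at e3
  rw [← h, log_pow] at e1
  push_cast at e1
  linarith

/-- Coefficients of `(1+z)^(-1/2)`. -/
noncomputable def acbC (k : ℕ) : ℝ := (-1) ^ k * (Nat.centralBinom k : ℝ) / 4 ^ k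

theorem acbC_abs (k : ℕ) : |acbC k| ≤ 1 := by
  rw [acbC, abs_div, abs_mul, abs_pow, abs_neg, abs_one, one_pow, one_mul, Nat.abs_cast,
    abs_of_pos (by positivity), div_le_one (by positivity)]
  exact_mod_cast Nat.centralBinom_le_four_pow k

theorem acbC_succ (k : ℕ) : ((k : ℝ) + 1) * acbC (k + 1) = -(k + 1 / 2) * acbC k := by
  have h : ((k : ℝ) + 1) * Nat.centralBinom (k + 1) = 2 * (2 * k + 1) * Nat.centralBinom k := by
    exact_mod_cast Nat.succ_mul_centralBinom_succ k
  rw [acbC, acbC, pow_succ, pow_succ]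
  field_simp
  linear_combination (-2) * h

theorem acb_binom {z : ℝ} (h0 : 0 ≤ z) (h1 : z < 1) :
    ∑' k, acbC k * z ^ k = (√(1 + z))⁻¹ := by
  have hb : ∀ k : ℕ, |(k + 1 : ℝ) * acbC (k + 1)| ≤ k + 1 := fun k => by
    rw [abs_mul, abs_of_nonneg (by positivity : (0 : ℝ) ≤ k + 1)]
    exact mul_le_of_le_one_right (by positivity) (acbC_abs _)
  have hb1 : ∀ k : ℕ, |acbC k| ≤ (k : ℝ) + 1 := fun k =>
    (acbC_abs k).trans (by linarith [(Nat.cast_nonneg k : (0 : ℝ) ≤ k)])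
  have hb2 : ∀ k : ℕ, |k * acbC k| ≤ (k : ℝ) + 1 := fun k => by
    rw [abs_mul, Nat.abs_cast]
    have := mul_le_of_le_one_right (Nat.cast_nonneg k : (0 : ℝ) ≤ k) (acbC_abs k)
    linarith
  have hf : ∀ x : ℝ, |x| < 1 → HasDerivAt (fun z => ∑' k, acbC k * z ^ k)
      (-(1 / 2) * (∑' k, acbC k * x ^ k) / (1 + x)) x := by
    intro x hx
    have hx' := abs_lt.1 hx
    have hd := (acb_deriv (n := fun k => k) hb (fun k => le_rfl) hx).const_add (acbC 0)
    have s0 := acb_summable (n := fun k => k) hb1 (fun k => le_rfl) hx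
    have s1 := acb_summable (n := fun k => k) hb2 (fun k => le_rfl) hx
    have ev : (fun z => ∑' k, acbC k * z ^ k) =ᶠ[nhds x]
        (fun z => acbC 0 + ∑' k : ℕ, ((k + 1 : ℝ) * acbC (k + 1)) * (z ^ (k + 1) / ((k : ℝ) + 1))) := by
      filter_upwards [(isOpen_Ioo (a := (-1 : ℝ)) (b := 1)).mem_nhds hx'] with z hz
      rw [(acb_summable (n := fun k => k) hb1 (fun k => le_rfl) (abs_lt.2 hz)).tsum_eq_zero_add]
      simp only [pow_zero, mul_one]
      congr 1
      refine tsum_congr fun k => ?_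
      have : (k : ℝ) + 1 ≠ 0 := by positivity
      field_simp
    convert! hd.congr_of_eventuallyEq ev using 1
    rw [div_eq_iff (by linarith)]
    have e1 : ∑' k : ℕ, ((k + 1 : ℝ) * acbC (k + 1)) * x ^ k
        = -(∑' k : ℕ, (k * acbC k) * x ^ k) - 1 / 2 * ∑' k, acbC k * x ^ k := by
      rw [← tsum_mul_left, ← tsum_neg, ← s1.neg.tsum_sub (s0.mul_left _)]
      refine tsum_congr fun k => ?_
      rw [acbC_succ]; ring
    have e2 : (∑' k : ℕ, ((k + 1 : ℝ) * acbC (k + 1)) * x ^ k) * x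
        = ∑' k : ℕ, (k * acbC k) * x ^ k := by
      rw [s1.tsum_eq_zero_add, ← tsum_mul_right]
      simp only [Nat.cast_zero, zero_mul, zero_add]
      refine tsum_congr fun k => ?_
      push_cast; ring
    linear_combination -e1 - e2
  rcases h0.eq_or_lt with rfl | h0
  · rw [tsum_eq_single 0 (fun k hk => by simp [hk])]
    simp [acbC]
  have hg : ∀ x : ℝ, |x| < 1 → HasDerivAt (fun z => (∑' k, acbC k * z ^ k) * √(1 + z)) 0 x := by
    intro x hx
    have hx' := abs_lt.1 hx
    have hp : 0 < 1 + x := by linarith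
    have d := (hf x hx).mul (((hasDerivAt_id x).const_add 1).sqrt (by simpa using hp.ne'))
    convert! d using 1
    have hs : √(1 + x) ^ 2 = 1 + x := sq_sqrt hp.le
    have : 0 < √(1 + x) := sqrt_pos.2 hp
    simp only [id]
    generalize √(1 + x) = s at *
    rw [← hs]
    field_simp
    ring
  have := acb_const (f := fun z => (∑' k, acbC k * z ^ k) * √(1 + z)) h0 ?_ ?_
  · have e : ∑' k, acbC k * (0 : ℝ) ^ k = 1 := by
      rw [tsum_eq_single 0 (fun k hk => by simp [hk])]
      simp [acbC]
    simp only [e] at this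
    simp at this
    exact eq_inv_of_mul_eq_one_left this
  · exact fun y hy => (hg y (abs_lt.2 ⟨by linarith [hy.1], by linarith [hy.2]⟩)).continuousAt.continuousWithinAt
  · exact fun y hy => hg y (abs_lt.2 ⟨by linarith [hy.1], by linarith [hy.2]⟩)

theorem acb_arsinh {t : ℝ} (h0 : 0 < t) (h1 : t < 1) :
    ∑' k : ℕ, acbC k * (t ^ (2 * k + 1) / (2 * (k : ℝ) + 1)) = arsinh t := by
  have hb1 : ∀ k : ℕ, |acbC k| ≤ (k : ℝ) + 1 := fun k =>
    (acbC_abs k).trans (by linarith [(Nat.cast_nonneg k : (0 : ℝ) ≤ k)])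
  have hg : ∀ x : ℝ, |x| < 1 → HasDerivAt (fun t =>
      (∑' k : ℕ, acbC k * (t ^ (2 * k + 1) / (2 * (k : ℝ) + 1))) - arsinh t) 0 x := by
    intro x hx
    have d := acb_deriv (n := fun k => 2 * k) hb1 (fun k => by omega) hx
    simp only [pow_mul] at d
    rw [acb_binom (sq_nonneg x) (by rw [← sq_abs]; nlinarith [abs_nonneg x])] at d
    convert! d.sub (hasDerivAt_arsinh x) using 1
    · funext t; simp [pow_succ, pow_mul]
    · simp
  have := acb_const (f := fun t =>
      (∑' k : ℕ, acbC k * (t ^ (2 * k + 1) / (2 * (k : ℝ) + 1))) - arsinh t) h0 ?_ ?_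
  · simp at this
    linarith
  · exact fun y hy => (hg y (abs_lt.2 ⟨by linarith [hy.1], by linarith [hy.2]⟩)).continuousAt.continuousWithinAt
  · exact fun y hy => hg y (abs_lt.2 ⟨by linarith [hy.1], by linarith [hy.2]⟩)

noncomputable def acbS (t : ℝ) : ℝ :=
  ∑' k : ℕ, (acbC k / (2 * (k : ℝ) + 1)) * (t ^ (2 * k + 1) / (2 * (k : ℝ) + 1))

theorem acbS_deriv {t : ℝ} (ht : |t| < 1) :
    HasDerivAt acbS (∑' k : ℕ, (acbC k / (2 * (k : ℝ) + 1)) * t ^ (2 * k)) t := by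
  have hb1 : ∀ k : ℕ, |acbC k / (2 * (k : ℝ) + 1)| ≤ (k : ℝ) + 1 := fun k => by
    have hk : (0 : ℝ) ≤ k := Nat.cast_nonneg k
    rw [abs_div, abs_of_pos (by positivity : 0 < 2 * (k : ℝ) + 1), div_le_iff₀ (by positivity)]
    nlinarith [acbC_abs k]
  convert! acb_deriv (n := fun k => 2 * k) hb1 (fun k => by omega) ht using 1
  funext t
  simp [acbS]

theorem acbS_sinh {a : ℝ} (h0 : 0 < a) (h1 : sinh a < 1) :
    acbS (sinh a) = a ^ 2 / 2 + acbLi (1 - exp (-2 * a)) / 2 := by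
  have := acb_const (f := fun u => acbS (sinh u) - u ^ 2 / 2 - acbLi (1 - exp (-2 * u)) / 2)
    h0 ?_ ?_
  · simp [acbLi_zero, acbS] at this
    simp only [acbS, neg_mul]
    linarith
  · refine ContinuousOn.sub (ContinuousOn.sub ?_ (by fun_prop)) (ContinuousOn.div_const ?_ _)
    · intro u hu
      have : 0 ≤ sinh u := sinh_nonneg_iff.2 hu.1
      have h2 : sinh u ≤ sinh a := sinh_le_sinh.2 hu.2
      refine (ContinuousAt.comp (f := sinh) (acbS_deriv ?_).continuousAt
        continuous_sinh.continuousAt).continuousWithinAt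
      rw [abs_of_nonneg this]; linarith
    · refine acbLi_cont.comp (by fun_prop) fun u hu => ⟨?_, ?_⟩
      · have : exp (-2 * u) ≤ 1 := exp_le_one_iff.2 (by linarith [hu.1])
        linarith
      · linarith [exp_pos (-2 * u)]
  · intro u ⟨hu0, hu1⟩
    have hs : 0 < sinh u := sinh_pos_iff.2 hu0
    have hs1 : sinh u < sinh a := sinh_lt_sinh.2 hu1
    have he : exp (-2 * u) < 1 := by rw [exp_lt_one_iff]; linarith
    have hep := exp_pos (-2 * u)
    have d1 := (acbS_deriv (t := sinh u) (by rw [abs_of_pos hs]; linarith)).comp u (hasDerivAt_sinh u)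
    have hA : ∑' k : ℕ, (acbC k / (2 * (k : ℝ) + 1)) * sinh u ^ (2 * k) = u / sinh u := by
      rw [eq_div_iff hs.ne', ← tsum_mul_right]
      have := acb_arsinh hs (by linarith)
      rw [arsinh_sinh] at this
      refine Eq.trans (tsum_congr fun k => ?_) this
      ring
    rw [hA] at d1
    have de : HasDerivAt (fun u : ℝ => 1 - exp (-2 * u)) (2 * exp (-2 * u)) u := by
      have := (((hasDerivAt_id u).const_mul (-2)).exp).const_sub 1
      convert! this using 1
      simp; ring
    have d3 := (acbLi_deriv (x := 1 - exp (-2 * u)) (by rw [abs_of_pos (by linarith)]; linarith)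
      (by linarith)).comp u de
    have d2 := (hasDerivAt_pow 2 u).div_const 2
    convert! (d1.sub d2).sub (d3.div_const 2) using 1
    rw [sub_sub_cancel, log_exp]
    have hne : 1 - exp (-2 * u) ≠ 0 := by linarith
    have hE : exp (-2 * u) = exp (-u) ^ 2 := by rw [← exp_nat_mul]; congr 1; push_cast; ring
    have hm : exp u * exp (-u) = 1 := by rw [← exp_add]; simp
    have hcs : cosh u / sinh u = (1 + exp (-2 * u)) / (1 - exp (-2 * u)) := by
      rw [div_eq_div_iff hs.ne' hne, hE, cosh_eq, sinh_eq]
      linear_combination (-exp (-u)) * hm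
    have : u / sinh u * cosh u = u * ((1 + exp (-2 * u)) / (1 - exp (-2 * u))) := by
      rw [← hcs]; ring
    rw [this]
    generalize exp (-2 * u) = e at *
    field_simp
    push_cast
    ring

/-- `∑_{k≥0} (−1)^k·C(2k,k)/(16^k·(2k+1)²) = π²/10`. -/
theorem alternating_central_binom_sum :
    (∑' k : ℕ, (-1 : ℝ)^k * ((2 * k).choose k : ℝ) / (16^k * (2 * (k : ℝ) + 1)^2))
      = π^2 / 10 := by
  have hs : sinh (arsinh (1 / 2)) = 1 / 2 := sinh_arsinh _
  have ha : 0 < arsinh (1 / 2) := arsinh_pos_iff.2 (by norm_num)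
  have key := acbS_sinh ha (by rw [hs]; norm_num)
  rw [hs] at key
  generalize arsinh (1 / 2) = a at *
  have hE : exp (-2 * a) = exp (-a) ^ 2 := by rw [← exp_nat_mul]; congr 1; push_cast; ring
  have hm : exp a * exp (-a) = 1 := by rw [← exp_add]; simp
  have hx : exp (-a) ^ 2 = 1 - exp (-a) := by
    rw [sinh_eq] at hs
    linear_combination hm - 2 * exp (-a) * hs
  have hg := acbLi_golden (exp_pos (-a)) hx
  rw [log_exp] at hg
  rw [hE, hx, sub_sub_cancel, hg] at key
  have : (∑' k : ℕ, (-1 : ℝ)^k * ((2 * k).choose k : ℝ) / (16^k * (2 * (k : ℝ) + 1)^2))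
      = 2 * acbS (1 / 2) := by
    rw [acbS, ← tsum_mul_left]
    refine tsum_congr fun k => ?_
    rw [acbC, Nat.centralBinom_eq_two_mul_choose, pow_succ (1 / 2 : ℝ), pow_mul,
      show (16 : ℝ) = 4 * 4 by norm_num, mul_pow, show ((1 / 2 : ℝ) ^ 2) = 1 / 4 by norm_num,
      div_pow, one_pow]
    field_simp
  rw [this, key]
  ring
end

section
/- The inverse central-binomial harmonic sum ∑_{n≥0} Hₙ/(C(2n,n)·(2n+1)) equals (8/(3√3))·Cl₂(π/3) − (2π/(3√3))·ln 3, where Hₙ = ∑_{k=1}^{n} 1/k is the n-th harmonic number (H₀ = 0), C(2n,n) denotes the central binomial coefficient, and Cl₂(π/3) = ∑_{n≥1} sin(nπ/3)/n². -/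
open Real

/-- The `n`-th harmonic number `Hₙ = ∑_{k=1}^n 1/k`, with `H₀ = 0`. -/
noncomputable def harmonicNum (n : ℕ) : ℝ := ∑ k ∈ Finset.range n, 1 / ((k : ℝ) + 1)

open MeasureTheory intervalIntegral Set

lemma betaJ (n : ℕ) : ∫ x in (0:ℝ)..1, (x * (1 - x)) ^ n
    = 1 / (((2 * n).choose n : ℝ) * (2 * (n : ℝ) + 1)) := by
  have hc : ∀ n : ℕ, ((2 * n).choose n : ℝ) = (n.centralBinom : ℝ) := by
    intro n; rw [Nat.centralBinom]
  rw [hc]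
  induction n with
  | zero => simp
  | succ n ih =>
    have h1 : ∫ x in (0:ℝ)..1, (((n:ℝ) + 1) * (x * (1 - x)) ^ n
        - (4 * n + 6) * (x * (1 - x)) ^ (n + 1)) = 0 := by
      have := integral_eq_sub_of_hasDerivAt (a := 0) (b := 1)
        (f := fun x : ℝ => (x * (1 - x)) ^ (n + 1) * (1 - 2 * x))
        (f' := fun x : ℝ => (((n:ℝ) + 1) * (x * (1 - x)) ^ n
        - (4 * n + 6) * (x * (1 - x)) ^ (n + 1))) ?_ ?_
      · rw [this]; simp
      · intro x _
        have h := (((hasDerivAt_id x).mul ((hasDerivAt_id x).const_sub 1)).pow (n + 1)).mul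
          (((hasDerivAt_id x).const_mul 2).const_sub 1)
        convert! h using 1
        simp [pow_succ]
        ring
      · apply Continuous.intervalIntegrable; fun_prop
    rw [intervalIntegral.integral_sub (by apply Continuous.intervalIntegrable; fun_prop)
      (by apply Continuous.intervalIntegrable; fun_prop), intervalIntegral.integral_const_mul,
      intervalIntegral.integral_const_mul, ih] at h1
    have h2 := Nat.succ_mul_centralBinom_succ n
    have h3 : ((n:ℝ) + 1) * (n + 1).centralBinom = 2 * (2 * n + 1) * n.centralBinom := by
      exact_mod_cast h2
    have p1 : (0:ℝ) < n.centralBinom := by exact_mod_cast Nat.centralBinom_pos n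
    have p2 : (0:ℝ) < (n+1).centralBinom := by exact_mod_cast Nat.centralBinom_pos (n+1)
    set J := ∫ x in (0:ℝ)..1, (x * (1 - x)) ^ (n + 1)
    have h4 : (4 * (n:ℝ) + 6) * J = (n + 1) * (1 / (n.centralBinom * (2 * n + 1))) := by linarith
    have h5 : J = (n + 1) * (1 / (n.centralBinom * (2 * n + 1))) / (4 * (n:ℝ) + 6) := by
      field_simp; field_simp at h4; linarith
    rw [h5]
    push_cast
    rw [div_eq_div_iff (by positivity) (by positivity)]
    field_simp
    linear_combination (2 * (n:ℝ) + 3) * h3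

lemma harm_le (n : ℕ) : 0 ≤ harmonicNum n ∧ harmonicNum n ≤ n := by
  unfold harmonicNum
  constructor
  · apply Finset.sum_nonneg; intro i _; positivity
  · have : ∑ k ∈ Finset.range n, 1 / ((k : ℝ) + 1) ≤ ∑ k ∈ Finset.range n, (1:ℝ) := by
      apply Finset.sum_le_sum; intro i _
      rw [div_le_one (by positivity)]
      have : (0:ℝ) ≤ i := by positivity
      linarith
    simpa using this

lemma harm_summable {t : ℝ} (h0 : 0 ≤ t) (h1 : t < 1) : Summable fun n => harmonicNum n * t ^ n := by
  have := summable_pow_mul_geometric_of_norm_lt_one (R := ℝ) 1 (r := t)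
    (by rw [Real.norm_eq_abs, abs_of_nonneg h0]; exact h1)
  refine Summable.of_nonneg_of_le (fun n => mul_nonneg (harm_le n).1 (pow_nonneg h0 n)) ?_ this
  intro n
  simp only [pow_one]
  exact mul_le_mul_of_nonneg_right (harm_le n).2 (pow_nonneg h0 n)

lemma harm_gen {t : ℝ} (h0 : 0 ≤ t) (h1 : t < 1) :
    ∑' n, harmonicNum n * t ^ n = - (Real.log (1 - t) / (1 - t)) := by
  have hs := harm_summable h0 h1
  have hl := Real.hasSum_pow_div_log_of_abs_lt_one (x := t) (by rw [abs_of_nonneg h0]; exact h1)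
  have e := hs.tsum_eq_zero_add
  have e2 : ∀ n, harmonicNum (n + 1) * t ^ (n + 1)
      = t * (harmonicNum n * t ^ n) + t ^ (n + 1) / ((n:ℝ) + 1) := by
    intro n
    unfold harmonicNum
    rw [Finset.sum_range_succ]; ring
  simp_rw [e2] at e
  rw [(hs.mul_left t).tsum_add hl.summable, hl.tsum_eq, tsum_mul_left] at e
  have z : harmonicNum 0 = 0 := by simp [harmonicNum]
  rw [z] at e
  have : 1 - t ≠ 0 := by linarith
  field_simp
  linarith

lemma sumA : (∑' n : ℕ, harmonicNum n / (((2 * n).choose n : ℝ) * (2 * (n : ℝ) + 1)))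
    = - ∫ x in (0:ℝ)..1, Real.log (1 - x + x ^ 2) / (1 - x + x ^ 2) := by
  have hint : ∀ n : ℕ, ∫ x in Ioc (0:ℝ) 1, harmonicNum n * (x * (1 - x)) ^ n
      = harmonicNum n / (((2 * n).choose n : ℝ) * (2 * (n : ℝ) + 1)) := by
    intro n
    rw [← integral_of_le zero_le_one, intervalIntegral.integral_const_mul, betaJ]; ring
  have hb : ∀ x ∈ Ioc (0:ℝ) 1, 0 ≤ x * (1 - x) ∧ x * (1 - x) ≤ 1 / 4 := by
    intro x hx
    exact ⟨mul_nonneg hx.1.le (by linarith [hx.2]), by nlinarith [sq_nonneg (x - 1/2)]⟩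
  have key := MeasureTheory.hasSum_integral_of_summable_integral_norm
    (μ := volume.restrict (Ioc (0:ℝ) 1))
    (F := fun (n : ℕ) (x : ℝ) => harmonicNum n * (x * (1 - x)) ^ n) ?_ ?_
  · simp_rw [hint] at key
    rw [key.tsum_eq, integral_of_le zero_le_one, ← MeasureTheory.integral_neg]
    apply setIntegral_congr_fun measurableSet_Ioc
    intro x hx
    simp only
    rw [harm_gen (hb x hx).1 (by linarith [(hb x hx).2])]
    congr 3 <;> ring
  · intro n
    apply Continuous.integrableOn_Ioc; fun_prop
  · have e : ∀ n : ℕ, ∫ x in Ioc (0:ℝ) 1, ‖harmonicNum n * (x * (1 - x)) ^ n‖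
      = harmonicNum n / (((2 * n).choose n : ℝ) * (2 * (n : ℝ) + 1)) := by
      intro n
      rw [← hint]
      apply setIntegral_congr_fun measurableSet_Ioc
      intro x hx
      exact Real.norm_of_nonneg (mul_nonneg (harm_le n).1 (pow_nonneg (hb x hx).1 n))
    have hs := harm_summable (t := 1/4) (by norm_num) (by norm_num)
    refine Summable.of_nonneg_of_le (fun n => integral_nonneg (fun x => norm_nonneg _)) ?_ hs
    intro n
    rw [e, ← hint, ← integral_of_le zero_le_one]
    have : ∫ x in (0:ℝ)..1, harmonicNum n * (1/4 : ℝ) ^ n = harmonicNum n * (1/4 : ℝ) ^ n := by simp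
    rw [← this]
    apply integral_mono_on_of_le_Ioo zero_le_one
    · apply Continuous.intervalIntegrable; fun_prop
    · apply Continuous.intervalIntegrable; fun_prop
    intro x hx
    have := hb x ⟨hx.1, hx.2.le⟩
    exact mul_le_mul_of_nonneg_left (pow_le_pow_left₀ this.1 this.2 n) (harm_le n).1

lemma int_pow_log (n : ℕ) : ∫ x in (0:ℝ)..1, x ^ n * Real.log x = - (1 / ((n:ℝ) + 1) ^ 2) := by
  have := integral_eq_sub_of_hasDerivAt_of_le (a := 0) (b := 1) zero_le_one
        (f := fun x : ℝ => x ^ n * (x * Real.log x) / (n + 1) - x ^ (n + 1) / ((n:ℝ) + 1) ^ 2)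
        (f' := fun x : ℝ => x ^ n * Real.log x) ?_ ?_ ?_
  · rw [this]; simp
  · apply Continuous.continuousOn
    have := Real.continuous_mul_log
    fun_prop
  · intro x hx
    have hx0 : x ≠ 0 := hx.1.ne'
    have h := (((((hasDerivAt_id x).pow (n + 1)).mul (Real.hasDerivAt_log hx0)).div_const
      ((n:ℝ) + 1))).sub (((hasDerivAt_id x).pow (n + 1)).div_const (((n:ℝ) + 1) ^ 2))
    convert! h using 1
    · ext y; simp [pow_succ]; ring
    · simp [pow_succ]
      field_simp
      ring
  · exact intervalIntegrable_log'.continuousOn_mul (by fun_prop)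

lemma sin_bd (y : ℝ) : |Real.sin y| ≤ 1 := Real.abs_sin_le_one y

lemma sin_summable {x : ℝ} (h0 : 0 ≤ x) (h1 : x < 1) :
    Summable fun n : ℕ => Real.sin (((n : ℝ) + 1) * π / 3) * x ^ n := by
  refine Summable.of_norm_bounded (summable_geometric_of_lt_one h0 h1) ?_
  intro n
  rw [norm_mul, norm_pow, Real.norm_of_nonneg h0]
  exact mul_le_of_le_one_left (pow_nonneg h0 n) (sin_bd _)

lemma sin_gen {x : ℝ} (h0 : 0 ≤ x) (h1 : x < 1) :
    ∑' n : ℕ, Real.sin (((n : ℝ) + 1) * π / 3) * x ^ n = (√3 / 2) / (1 - x + x ^ 2) := by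
  have hs := sin_summable h0 h1
  have hs1 := (summable_nat_add_iff 1).2 hs
  have e0 := hs.tsum_eq_zero_add
  have e1 := hs1.tsum_eq_zero_add
  have hr : ∀ n : ℕ, Real.sin (((n + 1 + 1 : ℕ) + 1 : ℝ) * π / 3)
     = Real.sin (((n + 1 : ℕ) + 1 : ℝ) * π / 3) - Real.sin (((n : ℝ) + 1) * π / 3) := by
    intro n
    have a1 : ((n + 1 + 1 : ℕ) + 1 : ℝ) * π / 3 = ((n + 1 : ℕ) + 1 : ℝ) * π / 3 + π / 3 := by
      push_cast; ring
    have a2 : ((n : ℝ) + 1) * π / 3 = ((n + 1 : ℕ) + 1 : ℝ) * π / 3 - π / 3 := by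
      push_cast; ring
    rw [a1, a2, Real.sin_add, Real.sin_sub, Real.cos_pi_div_three]; ring
  have hr2 : ∀ n : ℕ, Real.sin (((n + 1 + 1 : ℕ) + 1 : ℝ) * π / 3) * x ^ (n + 1 + 1)
     = x * (Real.sin (((n + 1 : ℕ) + 1 : ℝ) * π / 3) * x ^ (n + 1))
       - x ^ 2 * (Real.sin (((n : ℝ) + 1) * π / 3) * x ^ n) := by
    intro n; rw [hr]; ring
  simp_rw [hr2] at e1
  rw [(hs1.mul_left x).tsum_sub (hs.mul_left (x ^ 2)), tsum_mul_left, tsum_mul_left] at e1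
  have s0 : Real.sin ((((0 : ℕ) : ℝ) + 1) * π / 3) = √3 / 2 := by
    rw [← Real.sin_pi_div_three]; congr 1; push_cast; ring
  have s1 : Real.sin ((((0 + 1 : ℕ) : ℝ) + 1) * π / 3) = √3 / 2 := by
    rw [← Real.sin_pi_div_three, ← Real.sin_pi_sub]; congr 1; push_cast; ring
  rw [s0] at e0
  rw [s1] at e1
  have hp : 0 < 1 - x + x ^ 2 := by nlinarith
  rw [eq_div_iff hp.ne']
  linear_combination (1 - x) * e0 + e1

lemma sumB : (∑' n : ℕ, Real.sin (((n : ℝ) + 1) * π / 3) / ((n : ℝ) + 1)^2)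
    = - (√3 / 2) * ∫ x in (0:ℝ)..1, Real.log x / (1 - x + x ^ 2) := by
  have hint : ∀ n : ℕ, ∫ x in Ioo (0:ℝ) 1, Real.sin (((n : ℝ) + 1) * π / 3) * (x ^ n * Real.log x)
      = - (Real.sin (((n : ℝ) + 1) * π / 3) / ((n : ℝ) + 1)^2) := by
    intro n
    rw [← integral_Ioc_eq_integral_Ioo, ← integral_of_le zero_le_one,
      intervalIntegral.integral_const_mul, int_pow_log]; ring
  have hI : ∀ n : ℕ, IntegrableOn (fun x : ℝ => x ^ n * Real.log x) (Ioo 0 1) := by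
    intro n
    have : IntervalIntegrable (fun x : ℝ => x ^ n * Real.log x) volume 0 1 :=
      intervalIntegrable_log'.continuousOn_mul (by fun_prop)
    exact ((intervalIntegrable_iff_integrableOn_Ioc_of_le zero_le_one).1 this).mono_set
      Ioo_subset_Ioc_self
  have key := MeasureTheory.hasSum_integral_of_summable_integral_norm
    (μ := volume.restrict (Ioo (0:ℝ) 1))
    (F := fun (n : ℕ) (x : ℝ) => Real.sin (((n : ℝ) + 1) * π / 3) * (x ^ n * Real.log x)) ?_ ?_
  · simp_rw [hint] at key
    have k2 := key.neg.tsum_eq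
    simp only [neg_neg] at k2
    rw [k2, integral_of_le zero_le_one, integral_Ioc_eq_integral_Ioo, neg_mul,
      ← MeasureTheory.integral_const_mul]
    congr 1
    apply setIntegral_congr_fun measurableSet_Ioo
    intro x hx
    simp only
    simp_rw [← mul_assoc]
    rw [tsum_mul_right, sin_gen hx.1.le hx.2]
    ring
  · intro n
    exact (hI n).const_mul _
  · have hs : Summable fun n : ℕ => 1 / ((n:ℝ) + 1) ^ 2 := by
      have := (summable_nat_add_iff 1).2 (Real.summable_one_div_nat_pow.2 one_lt_two)
      simpa using this
    refine Summable.of_nonneg_of_le (fun n => integral_nonneg (fun x => norm_nonneg _)) ?_ hs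
    intro n
    have e : ∫ x in Ioo (0:ℝ) 1, - (x ^ n * Real.log x) = 1 / ((n:ℝ) + 1) ^ 2 := by
      rw [MeasureTheory.integral_neg, ← integral_Ioc_eq_integral_Ioo,
        ← integral_of_le zero_le_one, int_pow_log]; ring
    rw [← e]
    apply setIntegral_mono_on ((hI n).const_mul _).norm (hI n).neg measurableSet_Ioo
    intro x hx
    have : x ^ n * Real.log x ≤ 0 :=
      mul_nonpos_of_nonneg_of_nonpos (pow_nonneg hx.1.le n) (Real.log_nonpos hx.1.le hx.2.le)
    rw [norm_mul, Real.norm_of_nonpos this]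
    exact mul_le_of_le_one_left (by linarith) (sin_bd _)

lemma sub_gen (g : ℝ → ℝ) : ∫ x in (0:ℝ)..1, g x / (1 - x + x ^ 2)
    = (2 / √3) * ∫ θ in (-(π/6))..(π/6), g (Real.sin (θ + π / 6) / Real.cos θ) := by
  have hpi := Real.pi_pos
  have h3 : √3 ^ 2 = 3 := Real.sq_sqrt (by norm_num)
  have h3p : 0 < √3 := by positivity
  have hcos : ∀ θ ∈ uIcc (-(π/6)) (π/6), 0 < Real.cos θ := by
    intro θ hθ
    rw [uIcc_of_le (by linarith)] at hθ
    apply Real.cos_pos_of_mem_Ioo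
    constructor <;> linarith [hθ.1, hθ.2]
  have hle : -(π/6) ≤ π/6 := by linarith
  have key := integral_comp_mul_deriv_of_deriv_nonneg (a := -(π/6)) (b := π/6)
    (f := fun θ => Real.sin (θ + π / 6) / Real.cos θ)
    (f' := fun θ => √3 / 2 / Real.cos θ ^ 2) (g := fun x => g x / (1 - x + x ^ 2)) ?_ ?_ ?_
  · have e0 : Real.sin (-(π/6) + π / 6) / Real.cos (-(π/6)) = 0 := by simp
    have e1 : Real.sin (π/6 + π / 6) / Real.cos (π/6) = 1 := by
      have : π / 6 + π / 6 = π / 3 := by ring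
      rw [this, Real.sin_pi_div_three, Real.cos_pi_div_six]; field_simp
    simp only at key
    rw [e0, e1] at key
    rw [← key, ← intervalIntegral.integral_const_mul]
    apply integral_congr
    intro θ hθ
    have hc := hcos θ hθ
    have hsc := Real.sin_sq_add_cos_sq θ
    simp only [Function.comp]
    have hx : 1 - Real.sin (θ + π / 6) / Real.cos θ + (Real.sin (θ + π / 6) / Real.cos θ) ^ 2
      = 3 / 4 / Real.cos θ ^ 2 := by
      rw [Real.sin_add, Real.sin_pi_div_six, Real.cos_pi_div_six]
      field_simp
      linear_combination (Real.sin θ ^ 2) * 4 * h3 + 12 * hsc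
    rw [hx]
    field_simp
    rw [h3]; ring
  · apply ContinuousOn.div (by fun_prop) (by fun_prop)
    intro x hx; exact (hcos x hx).ne'
  · intro θ hθ
    rw [min_eq_left hle, max_eq_right hle] at hθ
    have hc := hcos θ (by rw [uIcc_of_le hle]; exact ⟨hθ.1.le, hθ.2.le⟩)
    have h := ((Real.hasDerivAt_sin (θ + π / 6)).comp θ ((hasDerivAt_id θ).add_const (π/6))).div
      (Real.hasDerivAt_cos θ) hc.ne'
    convert! h using 1
    have hsc := Real.sin_sq_add_cos_sq θ
    simp only [Function.comp, id, Real.sin_add, Real.cos_add, Real.sin_pi_div_six, Real.cos_pi_div_six]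
    field_simp
    linear_combination -√3 * hsc
  · intro θ hθ; positivity

lemma main_rel : (∫ x in (0:ℝ)..1, Real.log (1 - x + x ^ 2) / (1 - x + x ^ 2))
    = (4 / 3) * (∫ x in (0:ℝ)..1, Real.log x / (1 - x + x ^ 2))
      + 2 * π * Real.log 3 / (3 * √3) := by
  have hpi := Real.pi_pos
  have h3 : √3 ^ 2 = 3 := Real.sq_sqrt (by norm_num)
  have h3p : 0 < √3 := by positivity
  have hle : -(π/6) ≤ π/6 := by linarith
  rw [sub_gen (fun x => Real.log (1 - x + x ^ 2)), sub_gen Real.log]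
  have hcos : ∀ θ ∈ Ioc (-(π/6)) (π/6), 0 < Real.cos θ := by
    intro θ hθ
    apply Real.cos_pos_of_mem_Ioo
    constructor <;> linarith [hθ.1, hθ.2]
  have hsin : ∀ θ ∈ Ioc (-(π/6)) (π/6), 0 < Real.sin (θ + π/6) := by
    intro θ hθ
    apply Real.sin_pos_of_pos_of_lt_pi <;> linarith [hθ.1, hθ.2]
  have I : ∀ a b : ℝ, IntervalIntegrable (fun x => Real.log (Real.sin x)) volume a b :=
    fun a b => intervalIntegrable_log_sin
  have Ic : IntervalIntegrable (fun x => Real.log (Real.cos x)) volume (-(π/6)) (π/6) := by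
    have := (I (-(π/6) + π/2) (π/6 + π/2)).comp_add_right (π/2)
    simpa [Real.sin_add_pi_div_two] using this
  have Is : IntervalIntegrable (fun x => Real.log (Real.sin (x + π/6))) volume (-(π/6)) (π/6) := by
    have := (I (-(π/6) + π/6) (π/6 + π/6)).comp_add_right (π/6)
    simpa using this
  have D1 : ∫ θ in (-(π/6))..(π/6), Real.log (Real.cos θ)
      = ∫ x in (π/3)..(2*π/3), Real.log (Real.sin x) := by
    have := intervalIntegral.integral_comp_add_right (a := -(π/6)) (b := π/6)
      (fun x => Real.log (Real.sin x)) (π/2)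
    simp only [Real.sin_add_pi_div_two] at this
    rw [this]; congr 1 <;> ring
  have E1 : ∫ θ in (-(π/6))..(π/6), Real.log (Real.sin (θ + π/6))
      = ∫ x in (0:ℝ)..(π/3), Real.log (Real.sin x) := by
    have := intervalIntegral.integral_comp_add_right (a := -(π/6)) (b := π/6)
      (fun x => Real.log (Real.sin x)) (π/6)
    rw [this]; congr 1 <;> ring
  have E2 : ∫ x in (2*π/3)..π, Real.log (Real.sin x)
      = ∫ x in (0:ℝ)..(π/3), Real.log (Real.sin x) := by
    have := intervalIntegral.integral_comp_sub_left (a := 0) (b := π/3)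
      (fun x => Real.log (Real.sin x)) π
    simp only [Real.sin_pi_sub] at this
    rw [this]; congr 1 <;> ring
  have T := integral_log_sin_zero_pi
  rw [← integral_add_adjacent_intervals (I 0 (2*π/3)) (I _ _),
    ← integral_add_adjacent_intervals (I 0 (π/3)) (I _ _), E2, ← D1, ← E1] at T
  have A1 : ∫ θ in (-(π/6))..(π/6), Real.log (1 - Real.sin (θ + π / 6) / Real.cos θ
      + (Real.sin (θ + π / 6) / Real.cos θ) ^ 2)
      = ∫ θ in (-(π/6))..(π/6), (Real.log (3/4) - 2 * Real.log (Real.cos θ)) := by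
    rw [integral_of_le hle, integral_of_le hle]
    apply setIntegral_congr_fun measurableSet_Ioc
    intro θ hθ
    have hc := hcos θ hθ
    have hsc := Real.sin_sq_add_cos_sq θ
    have hx : 1 - Real.sin (θ + π / 6) / Real.cos θ + (Real.sin (θ + π / 6) / Real.cos θ) ^ 2
      = 3 / 4 / Real.cos θ ^ 2 := by
      rw [Real.sin_add, Real.sin_pi_div_six, Real.cos_pi_div_six]
      field_simp
      linear_combination (Real.sin θ ^ 2) * 4 * h3 + 12 * hsc
    simp only
    rw [hx, Real.log_div (by norm_num) (by positivity), Real.log_pow]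
    norm_num
  have B1 : ∫ θ in (-(π/6))..(π/6), Real.log (Real.sin (θ + π / 6) / Real.cos θ)
      = ∫ θ in (-(π/6))..(π/6), (Real.log (Real.sin (θ + π/6)) - Real.log (Real.cos θ)) := by
    rw [integral_of_le hle, integral_of_le hle]
    apply setIntegral_congr_fun measurableSet_Ioc
    intro θ hθ
    exact Real.log_div (hsin θ hθ).ne' (hcos θ hθ).ne'
  rw [A1, B1, intervalIntegral.integral_sub (by simp) (Ic.const_mul 2),
    intervalIntegral.integral_sub Is Ic, intervalIntegral.integral_const_mul,
    intervalIntegral.integral_const]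
  have l34 : Real.log (3/4) = Real.log 3 - 2 * Real.log 2 := by
    rw [Real.log_div (by norm_num) (by norm_num)]
    have : (4:ℝ) = 2 ^ 2 := by norm_num
    rw [this, Real.log_pow]; norm_num
  rw [l34, smul_eq_mul]
  generalize (∫ θ in (-(π/6))..(π/6), Real.log (Real.sin (θ + π/6))) = E at *
  generalize (∫ θ in (-(π/6))..(π/6), Real.log (Real.cos θ)) = D at *
  field_simp
  linear_combination (-12) * T

/-- `∑_{n≥0} Hₙ/(C(2n,n)·(2n+1)) = (8/(3√3))·Cl₂(π/3) − (2π/(3√3))·ln 3`,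
where `Cl₂(π/3) = ∑_{n≥1} sin(nπ/3)/n²`. -/
theorem inverse_binomial_harmonic_sum :
    (∑' n : ℕ, harmonicNum n / (((2 * n).choose n : ℝ) * (2 * (n : ℝ) + 1)))
      = (8 / (3 * Real.sqrt 3)) *
          (∑' n : ℕ, Real.sin (((n : ℝ) + 1) * π / 3) / ((n : ℝ) + 1)^2)
        - (2 * π / (3 * Real.sqrt 3)) * Real.log 3 := by
  rw [sumA, sumB, main_rel]
  have h3p : 0 < √3 := by positivity
  field_simp
  ring
end
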